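/- arXiv:1706.04255 — 6 statements merged into one kernel-verified Lean document; each statement's English description precedes it below -/
import Mathlib

section
/- Let u and v be distinct nonadjacent vertices of a connected finite simple graph G, let F be the graph obtained from G by adding the edge uv, and let P be any path from u to v in G. Then: (1) every bridge e of G that belongs to P is covered by uv, i.e., u and v lie in the two different components of G − e (equivalently, e is not a bridge of F); and (2) if Q₁, …, Q_s are the biconnected components of G crossed by P, then the subgraph of F induced by V(Q₁) ∪ … ∪ V(Q_s) is a biconnected component of F. -/
open SimpleGraph

/-- The graph obtained from `G` by deleting all its bridges; its connected
components are the biconnected components of `G`. -/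
def bicompGraph {α : Type*} (G : SimpleGraph α) : SimpleGraph α :=
  G.deleteEdges {e | G.IsBridge e}


lemma bicomp_adj {α : Type*} {G : SimpleGraph α} {a b : α} :
    (bicompGraph G).Adj a b ↔ G.Adj a b ∧ ¬ G.IsBridge s(a, b) := by
  simp [bicompGraph]

lemma bicomp_reachable {α : Type*} {G : SimpleGraph α} {a b : α}
    (h : G.IsEdgeReachable 2 a b) : (bicompGraph G).Reachable a b := by
  obtain ⟨w, hw⟩ := (h.reachable (by simp)).exists_isPath
  refine ⟨w.transfer _ fun e he => ?_⟩
  induction e with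
  | h x y =>
    have hadj := w.adj_of_mem_edges he
    rw [mem_edgeSet, bicomp_adj, isBridge_iff_not_isEdgeReachable_two hadj, not_not]
    exact ⟨hadj, hw.isTrail.isEdgeReachable_two_of_isEdgeReachable_two h
      (w.fst_mem_support_of_mem_edges he) (w.snd_mem_support_of_mem_edges he)⟩

lemma bicomp_mono {α : Type*} {G F : SimpleGraph α} (h : G ≤ F) :
    bicompGraph G ≤ bicompGraph F := by
  intro a b hab
  rw [bicomp_adj] at hab ⊢
  exact ⟨h hab.1, fun hb => hab.2 (hb.anti h)⟩

lemma trail_bridge {α : Type*} {G : SimpleGraph α} {e : Sym2 α} (hb : G.IsBridge e)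
    {u v : α} (P : G.Walk u v) (hP : P.IsTrail) (he : e ∈ P.edges) :
    ¬ (G.deleteEdges {e}).Reachable u v := by
  induction P with
  | nil => simp at he
  | @cons u w v h p ih =>
    rw [Walk.isTrail_cons] at hP
    intro hr
    by_cases hew : e = s(u, w)
    · subst hew
      have : (G.deleteEdges {s(u, w)}).Reachable w v :=
        reachable_deleteEdges_iff_exists_walk.2 ⟨p, hP.2⟩
      exact hb (hr.trans this.symm)
    · have he' : e ∈ p.edges := by simpa [hew] using he
      refine ih hP.1 he' (Reachable.trans (Adj.reachable ?_) hr)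
      rw [deleteEdges_adj]
      exact ⟨h.symm, by simpa [Sym2.eq_swap, eq_comm] using hew⟩

/-- Let `u, v` be distinct nonadjacent vertices of a connected graph `G`, let `F` be
obtained from `G` by adding the edge `uv`, and let `P` be a path from `u` to `v` in `G`.
Then (1) every bridge `e` of `G` belonging to `P` is covered by `uv` (`u` and `v` lie in
different components of `G - e`; equivalently `e` is not a bridge of `F`), and
(2) the union of the vertex sets of the biconnected components of `G` crossed by `P`
is (induces) a biconnected component of `F`. -/
theorem stmt2 {α : Type*} [Fintype α] (G : SimpleGraph α) (hG : G.Connected)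
    (u v : α) (huv : u ≠ v) (hnadj : ¬ G.Adj u v)
    (F : SimpleGraph α) (hF : F = G ⊔ fromEdgeSet {s(u, v)})
    (P : G.Walk u v) (hP : P.IsPath) :
    (∀ e : Sym2 α, G.IsBridge e → e ∈ P.edges →
        ¬ (G.deleteEdges {e}).Reachable u v ∧ ¬ F.IsBridge e) ∧
    (∃ C : (bicompGraph F).ConnectedComponent,
        C.supp = {w : α | ∃ x ∈ P.support, (bicompGraph G).Reachable x w}) := by
  classical
  have hGF : G ≤ F := hF ▸ le_sup_left
  have hFadj : ∀ a b, F.Adj a b → G.Adj a b ∨ s(a, b) = s(u, v) := by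
    intro a b h
    rw [hF, sup_adj, fromEdgeSet_adj] at h
    rcases h with h | h
    · exact Or.inl h
    · exact Or.inr h.1
  have hvu : F.Adj v u := by
    rw [hF, sup_adj, fromEdgeSet_adj]
    exact Or.inr ⟨Sym2.eq_swap, huv.symm⟩
  have hcyc : (Walk.cons hvu (P.mapLe hGF)).IsCycle := by
    rw [Walk.cons_isCycle_iff]
    refine ⟨(Walk.isPath_mapLe hGF).2 hP, fun h => hnadj ?_⟩
    rw [Walk.edges_mapLe_eq_edges] at h
    exact (P.adj_of_mem_edges h).symm
  refine ⟨fun e hb he => ⟨trail_bridge hb P hP.isTrail he, fun hFb =>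
    hFb.notMem_edges_of_isCycle hcyc ?_⟩, (bicompGraph F).connectedComponentMk u, ?_⟩
  · simp [he]
  ext w
  simp only [ConnectedComponent.mem_supp_iff, ConnectedComponent.eq, Set.mem_setOf_eq]
  constructor
  · rintro ⟨W⟩
    suffices H : ∀ {a b : α} (W : (bicompGraph F).Walk a b),
        (∃ x ∈ P.support, (bicompGraph G).Reachable x b) →
        ∃ x ∈ P.support, (bicompGraph G).Reachable x a from
      H W ⟨u, P.start_mem_support, Reachable.refl _⟩
    intro a b W hb
    induction W with
    | nil => exact hb
    | @cons a c b h p ih =>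
      obtain ⟨x, hx, hxc⟩ := ih hb
      rw [bicomp_adj] at h
      rcases hFadj _ _ h.1 with hG' | heq
      · by_cases hbr : G.IsBridge s(a, c)
        · by_cases heP : s(a, c) ∈ P.edges
          · exact ⟨a, P.fst_mem_support_of_mem_edges heP, Reachable.refl _⟩
          · exfalso
            have huvr : (G.deleteEdges {s(a, c)}).Reachable u v :=
              reachable_deleteEdges_iff_exists_walk.2 ⟨P, heP⟩
            have hr := not_not.1 (mt isBridge_iff.2 h.2)
            have key : ∀ {y z : α}, (F.deleteEdges {s(a, c)}).Walk y z →
                (G.deleteEdges {s(a, c)}).Reachable y z := by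
              intro y z q
              induction q with
              | nil => exact Reachable.refl _
              | cons hq q ihq =>
                refine Reachable.trans ?_ ihq
                rw [deleteEdges_adj] at hq
                rcases hFadj _ _ hq.1 with h1 | h1
                · exact Adj.reachable (deleteEdges_adj.2 ⟨h1, hq.2⟩)
                · rw [Sym2.eq_iff] at h1
                  rcases h1 with ⟨rfl, rfl⟩ | ⟨rfl, rfl⟩
                  · exact huvr
                  · exact huvr.symm
            obtain ⟨q⟩ := hr
            exact hbr (key q)
        · exact ⟨x, hx, hxc.trans (Adj.reachable (bicomp_adj.2 ⟨hG', hbr⟩)).symm⟩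
      · rw [Sym2.eq_iff] at heq
        rcases heq with ⟨rfl, -⟩ | ⟨rfl, -⟩
        · exact ⟨_, P.start_mem_support, Reachable.refl _⟩
        · exact ⟨_, P.end_mem_support, Reachable.refl _⟩
  · rintro ⟨x, hx, hxw⟩
    refine (hxw.mono (bicomp_mono hGF)).symm.trans (bicomp_reachable ?_)
    exact hcyc.isTrail.isEdgeReachable_two (by simp [hx]) (by simp)
end

section
/- Let G and H be finite simple graphs such that H is nonempty, H has no isolated vertices, and |V(H)| ≤ |V(G)|. Then there exists an injective map φ : V(H) → V(G) such that the superposition F = G ⊕_φ H is connected if and only if c(G) ≤ |V(H)| − c(H) + 1 and one of the following holds: (i) H is connected, or (ii) H is disconnected and i(G) ≤ |V(H)| − c(H); here c denotes the number of connected components and i(G) the number of isolated vertices of G. -/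
open SimpleGraph

/-- The superposition `G ⊕_φ H` of `G` and `H` with respect to an injective map
`φ : V(H) ↪ V(G)`. -/
def superpose {α β : Type*} (G : SimpleGraph α) (H : SimpleGraph β) (φ : β ↪ α) :
    SimpleGraph α :=
  G ⊔ SimpleGraph.map φ H

namespace SuperposeAux

lemma reach_ind {V : Type*} {Γ : SimpleGraph V} (p : V → Prop) {u v : V} (h : Γ.Reachable u v)
    (hu : p u) (step : ∀ a b, Γ.Adj a b → p a → p b) : p v := by
  obtain ⟨w⟩ := h
  induction w with
  | nil => exact hu
  | cons hadj _ ih => exact ih (step _ _ hadj hu)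

/-- The bipartite incidence graph with edges from `f x` to `q x` for `x ∈ S`. -/
def bg {β P Q : Type*} (f : β → P) (q : β → Q) (S : Set β) : SimpleGraph (P ⊕ Q) where
  Adj u v := ∃ x ∈ S, (u = Sum.inl (f x) ∧ v = Sum.inr (q x)) ∨
    (v = Sum.inl (f x) ∧ u = Sum.inr (q x))
  symm := ⟨by
    rintro u v ⟨x, hx, h⟩
    exact ⟨x, hx, h.symm⟩⟩
  loopless := ⟨by
    rintro u ⟨x, hx, ⟨h1, h2⟩ | ⟨h1, h2⟩⟩ <;> simp [h1] at h2⟩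

lemma bg_adj {β P Q : Type*} (f : β → P) (q : β → Q) {S : Set β} {x : β} (hx : x ∈ S) :
    (bg f q S).Adj (Sum.inl (f x)) (Sum.inr (q x)) := ⟨x, hx, Or.inl ⟨rfl, rfl⟩⟩

lemma bg_reach_of {β P Q : Type*} {f : β → P} {q : β → Q} {S : Set β}
    {Γ : SimpleGraph (P ⊕ Q)}
    (h : ∀ x ∈ S, Γ.Reachable (Sum.inl (f x)) (Sum.inr (q x))) {u v : P ⊕ Q}
    (huv : (bg f q S).Reachable u v) : Γ.Reachable u v := by
  refine reach_ind (fun w => Γ.Reachable u w) huv (Reachable.refl _) ?_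
  rintro a b ⟨x, hx, ⟨rfl, rfl⟩ | ⟨rfl, rfl⟩⟩ ha
  · exact ha.trans (h x hx)
  · exact ha.trans (h x hx).symm

lemma bg_edgeSet {β P Q : Type*} (f : β → P) (q : β → Q) :
    (bg f q Set.univ).edgeSet =
      Set.range (fun x => s((Sum.inl (f x) : P ⊕ Q), Sum.inr (q x))) := by
  ext e
  induction e with
  | _ u v =>
    simp only [mem_edgeSet, Set.mem_range, Sym2.eq_iff]
    constructor
    · rintro ⟨x, -, ⟨rfl, rfl⟩ | ⟨rfl, rfl⟩⟩
      · exact ⟨x, Or.inl ⟨rfl, rfl⟩⟩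
      · exact ⟨x, Or.inr ⟨rfl, rfl⟩⟩
    · rintro ⟨x, ⟨rfl, rfl⟩ | ⟨rfl, rfl⟩⟩
      · exact ⟨x, trivial, Or.inl ⟨rfl, rfl⟩⟩
      · exact ⟨x, trivial, Or.inr ⟨rfl, rfl⟩⟩

lemma card_le_of_connected {β P Q : Type*} [Fintype β] [Finite P] [Finite Q]
    (f : β → P) (q : β → Q)
    (h : (bg f q Set.univ).Connected) : Nat.card P + Nat.card Q ≤ Fintype.card β + 1 := by
  have h1 := h.card_vert_le_card_edgeSet_add_one
  rw [Nat.card_sum, bg_edgeSet] at h1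
  have h2 := Finite.card_range_le (fun x => s((Sum.inl (f x) : P ⊕ Q), Sum.inr (q x)))
  rw [Nat.card_eq_fintype_card (α := β)] at h2
  omega

lemma exists_redundant {β P Q : Type*} [Fintype β] [Finite P] [Finite Q] [Nonempty P]
    (f : β → P) (q : β → Q)
    (hc : Nat.card P + Nat.card Q ≤ Fintype.card β + 1)
    (h : ¬ (bg f q Set.univ).Connected) :
    ∃ x, (bg f q {x}ᶜ).Reachable (Sum.inl (f x)) (Sum.inr (q x)) := by
  by_contra! hno
  have hinj : Function.Injective (fun x => s((Sum.inl (f x) : P ⊕ Q), Sum.inr (q x))) := by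
    intro x y hxy
    by_contra hne
    simp only [Sym2.eq_iff, Sum.inl.injEq, Sum.inr.injEq, reduceCtorEq, and_false, or_false,
      false_and] at hxy
    apply hno x
    rw [hxy.1, hxy.2]
    exact (bg_adj f q (S := {x}ᶜ) (x := y) (fun h => hne h.symm)).reachable
  have hbr : ∀ x, (bg f q Set.univ).IsBridge s(Sum.inl (f x), Sum.inr (q x)) := by
    intro x
    rw [isBridge_iff]
    intro hr
    refine hno x (hr.mono ?_)
    intro a b hab
    rw [deleteEdges_adj] at hab
    obtain ⟨⟨y, -, hy⟩, hn⟩ := hab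
    refine ⟨y, ?_, hy⟩
    rintro rfl
    apply hn
    rcases hy with ⟨rfl, rfl⟩ | ⟨rfl, rfl⟩
    · rfl
    · exact Sym2.eq_swap
  have hac : (bg f q Set.univ).IsAcyclic := by
    rw [isAcyclic_iff_forall_adj_isBridge]
    rintro u v ⟨x, -, ⟨rfl, rfl⟩ | ⟨rfl, rfl⟩⟩
    · exact hbr x
    · rw [Sym2.eq_swap]; exact hbr x
  obtain ⟨T, hle, -, hT⟩ :=
    (connected_top (V := P ⊕ Q)).exists_isTree_le_of_le_of_isAcyclic le_top hac
  classical
  have := Fintype.ofFinite P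
  have := Fintype.ofFinite Q
  have hTc := hT.card_edgeFinset
  have hBc : Nat.card (bg f q Set.univ).edgeSet = Fintype.card β := by
    rw [bg_edgeSet, Nat.card_range_of_injective hinj, Nat.card_eq_fintype_card]
  rw [← Nat.card_eq_fintype_card, Nat.card_sum, edgeFinset_card, ← Nat.card_eq_fintype_card] at hTc
  have heq : (bg f q Set.univ).edgeSet = T.edgeSet := by
    apply Set.eq_of_subset_of_ncard_le (edgeSet_mono hle) _ (Set.toFinite _)
    rw [← Nat.card_coe_set_eq, ← Nat.card_coe_set_eq]
    omega
  rw [edgeSet_inj] at heq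
  exact h (heq ▸ hT.connected)

variable {α β : Type*} (G : SimpleGraph α) (H : SimpleGraph β)

/-- Incidence graph between components of `G` and of `H`. -/
abbrev ig (φ : β ↪ α) (S : Set β) : SimpleGraph (G.ConnectedComponent ⊕ H.ConnectedComponent) :=
  bg (fun x => G.connectedComponentMk (φ x)) H.connectedComponentMk S

lemma ig_connected_of (hne : Nonempty β) (φ : β ↪ α) (h : (superpose G H φ).Connected) :
    (ig G H φ Set.univ).Connected := by
  have key : ∀ u v : α, (ig G H φ Set.univ).Reachable
      (Sum.inl (G.connectedComponentMk u)) (Sum.inl (G.connectedComponentMk v)) := by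
    intro u v
    refine reach_ind (fun w => (ig G H φ Set.univ).Reachable
      (Sum.inl (G.connectedComponentMk u)) (Sum.inl (G.connectedComponentMk w)))
      (h.preconnected u v) (Reachable.refl _) ?_
    intro a b hab ha
    refine ha.trans ?_
    rcases hab with hab | hab
    · rw [ConnectedComponent.sound hab.reachable]
    · rw [SimpleGraph.map_adj] at hab
      obtain ⟨x, y, hxy, rfl, rfl⟩ := hab
      have h1 := (bg_adj (fun x => G.connectedComponentMk (φ x)) H.connectedComponentMk
        (Set.mem_univ x)).reachable
      have h2 := (bg_adj (fun x => G.connectedComponentMk (φ x)) H.connectedComponentMk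
        (Set.mem_univ y)).reachable
      rw [ConnectedComponent.sound hxy.reachable] at h1
      exact h1.trans h2.symm
  obtain ⟨x0⟩ := hne
  rw [connected_iff_exists_forall_reachable]
  refine ⟨Sum.inl (G.connectedComponentMk (φ x0)), ?_⟩
  rintro (c | c)
  · induction c using ConnectedComponent.ind with
    | _ v => exact key _ v
  · induction c using ConnectedComponent.ind with
    | _ x =>
      exact (key _ (φ x)).trans (bg_adj (fun x => G.connectedComponentMk (φ x))
        H.connectedComponentMk (Set.mem_univ x)).reachable

lemma connected_of_ig (hne : Nonempty β) (φ : β ↪ α) (h : (ig G H φ Set.univ).Connected) :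
    (superpose G H φ).Connected := by
  obtain ⟨x0⟩ := hne
  rw [connected_iff_exists_forall_reachable]
  refine ⟨φ x0, fun v => ?_⟩
  let p : G.ConnectedComponent ⊕ H.ConnectedComponent → Prop := fun w =>
    (∀ a, w = Sum.inl (G.connectedComponentMk a) → (superpose G H φ).Reachable (φ x0) a) ∧
    (∀ x, w = Sum.inr (H.connectedComponentMk x) → (superpose G H φ).Reachable (φ x0) (φ x))
  have hG : ∀ a b, G.Reachable a b → (superpose G H φ).Reachable a b :=
    fun a b hab => hab.mono le_sup_left
  have hH : ∀ x y, H.Reachable x y → (superpose G H φ).Reachable (φ x) (φ y) := by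
    intro x y hxy
    refine reach_ind (fun z => (superpose G H φ).Reachable (φ x) (φ z)) hxy (Reachable.refl _) ?_
    intro a b hab ha
    refine ha.trans (Adj.reachable ?_)
    exact Or.inr ((SimpleGraph.map_adj _ _ _ _).2 ⟨a, b, hab, rfl, rfl⟩)
  have := reach_ind p (h.preconnected (Sum.inl (G.connectedComponentMk (φ x0)))
    (Sum.inl (G.connectedComponentMk v))) ?_ ?_
  · exact this.1 v rfl
  · refine ⟨fun a ha => hG _ _ ?_, fun x hx => by simp at hx⟩
    exact ConnectedComponent.exact (Sum.inl.inj ha)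
  · rintro a b ⟨x, -, ⟨rfl, rfl⟩ | ⟨rfl, rfl⟩⟩ ha
    · refine ⟨fun a ha => by simp at ha, fun y hy => ?_⟩
      exact (ha.1 (φ x) rfl).trans (hH _ _ (ConnectedComponent.exact (Sum.inr.inj hy)))
    · refine ⟨fun c hc => ?_, fun x hx => by simp at hx⟩
      exact (ha.2 x rfl).trans (hG _ _ (ConnectedComponent.exact (Sum.inl.inj hc)))

/-- The swapping step. -/
lemma improve [Fintype α] [Fintype β] (hne : Nonempty β) (φ : β ↪ α)
    (hc : Nat.card G.ConnectedComponent + Nat.card H.ConnectedComponent ≤ Fintype.card β + 1)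
    (h : ¬ (ig G H φ Set.univ).Connected) :
    ∃ ψ : β ↪ α, (∀ u v, (ig G H φ Set.univ).Reachable u v → (ig G H ψ Set.univ).Reachable u v) ∧
      ∃ u v, (ig G H ψ Set.univ).Reachable u v ∧ ¬ (ig G H φ Set.univ).Reachable u v := by
  classical
  have : Nonempty G.ConnectedComponent := hne.map (fun x => G.connectedComponentMk (φ x))
  obtain ⟨x, hx⟩ := exists_redundant _ _ hc h
  have hv : ∃ v : α, ¬ (ig G H φ Set.univ).Reachable
      (Sum.inl (G.connectedComponentMk (φ x))) (Sum.inl (G.connectedComponentMk v)) := by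
    by_contra! hall
    apply h
    rw [connected_iff_exists_forall_reachable]
    refine ⟨Sum.inl (G.connectedComponentMk (φ x)), ?_⟩
    rintro (c | c)
    · induction c using ConnectedComponent.ind with
      | _ v => exact hall v
    · induction c using ConnectedComponent.ind with
      | _ y =>
        exact (hall (φ y)).trans (bg_adj (fun x => G.connectedComponentMk (φ x))
          H.connectedComponentMk (Set.mem_univ y)).reachable
  obtain ⟨v, hv⟩ := hv
  let ψ : β ↪ α := φ.trans (Equiv.swap (φ x) v).toEmbedding
  have hψx : ψ x = v := by simp [ψ]
  have hψv : ∀ y, φ y = v → ψ y = φ x := by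
    intro y hy
    simp [ψ, hy]
  have hψ : ∀ y, y ≠ x → φ y ≠ v → ψ y = φ y := by
    intro y h1 h2
    exact Equiv.swap_apply_of_ne_of_ne (fun e => h1 (φ.injective e)) h2
  have eψ : ∀ y, (ig G H ψ Set.univ).Reachable (Sum.inl (G.connectedComponentMk (ψ y)))
      (Sum.inr (H.connectedComponentMk y)) := fun y =>
    (bg_adj (fun x => G.connectedComponentMk (ψ x)) H.connectedComponentMk
      (Set.mem_univ y)).reachable
  have eφ : ∀ y, (ig G H φ Set.univ).Reachable (Sum.inl (G.connectedComponentMk (φ y)))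
      (Sum.inr (H.connectedComponentMk y)) := fun y =>
    (bg_adj (fun x => G.connectedComponentMk (φ x)) H.connectedComponentMk
      (Set.mem_univ y)).reachable
  have hgh : (ig G H ψ Set.univ).Reachable (Sum.inl (G.connectedComponentMk (φ x)))
      (Sum.inr (H.connectedComponentMk x)) := by
    refine (reach_ind (fun w => (ig G H φ Set.univ).Reachable
        (Sum.inl (G.connectedComponentMk (φ x))) w ∧ (ig G H ψ Set.univ).Reachable
        (Sum.inl (G.connectedComponentMk (φ x))) w) hx ⟨Reachable.refl _, Reachable.refl _⟩ ?_).2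
    rintro a b ⟨y, hy, ⟨rfl, rfl⟩ | ⟨rfl, rfl⟩⟩ ⟨h1, h2⟩
    · have hyv : φ y ≠ v := by
        rintro rfl
        exact hv h1
      have e := eψ y
      rw [hψ y hy hyv] at e
      exact ⟨h1.trans (eφ y), h2.trans e⟩
    · have h3 := h1.trans (eφ y).symm
      have hyv : φ y ≠ v := by
        rintro rfl
        exact hv h3
      have e := eψ y
      rw [hψ y hy hyv] at e
      exact ⟨h3, h2.trans e.symm⟩
  have hxv := eψ x
  rw [hψx] at hxv
  have hgv := hgh.trans hxv.symm
  refine ⟨ψ, ?_, _, _, hgv, hv⟩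
  intro a b hab
  refine bg_reach_of ?_ hab
  intro y _
  by_cases hyx : y = x
  · subst hyx; exact hgh
  by_cases hyv : φ y = v
  · have e := eψ y
    rw [hψv y hyv] at e
    rw [hyv]
    exact hgv.symm.trans e
  · have e := eψ y
    rwa [hψ y hyx hyv] at e

lemma exists_connected [Fintype α] [Fintype β] (hne : Nonempty β)
    (hcard : Fintype.card β ≤ Fintype.card α)
    (hc : Nat.card G.ConnectedComponent + Nat.card H.ConnectedComponent ≤ Fintype.card β + 1) :
    ∃ φ : β ↪ α, (superpose G H φ).Connected := by
  have : Nonempty (β ↪ α) := Function.Embedding.nonempty_of_card_le hcard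
  obtain ⟨φ, hφ⟩ := Finite.exists_max (fun φ : β ↪ α =>
    {p : (G.ConnectedComponent ⊕ H.ConnectedComponent) ×
      (G.ConnectedComponent ⊕ H.ConnectedComponent) |
      (ig G H φ Set.univ).Reachable p.1 p.2}.ncard)
  refine ⟨φ, connected_of_ig G H hne φ ?_⟩
  by_contra hnot
  obtain ⟨ψ, h1, u, v, h2, h3⟩ := improve G H hne φ hc hnot
  refine absurd (hφ ψ) (not_le.2 ?_)
  apply Set.ncard_lt_ncard _ (Set.toFinite _)
  refine ⟨fun p hp => h1 _ _ hp, fun hsub => h3 ?_⟩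
  exact hsub (a := (u, v)) h2

lemma isolated_bound [Fintype α] [Fintype β] (hne : Nonempty β)
    (hcard : Fintype.card β ≤ Fintype.card α)
    (hc : Nat.card G.ConnectedComponent + Nat.card H.ConnectedComponent ≤ Fintype.card β + 1)
    (hH : ¬ H.Connected) :
    {v : α | ∀ w : α, ¬ G.Adj v w}.ncard + Nat.card H.ConnectedComponent ≤ Fintype.card β := by
  have hinj : Set.InjOn G.connectedComponentMk {v : α | ∀ w : α, ¬ G.Adj v w} := by
    intro a ha b _ hab
    exact reach_ind (fun w => a = w) (ConnectedComponent.exact hab) rfl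
      (fun c d hcd hac => absurd (hac ▸ hcd) (ha d))
  by_cases hE : ∃ a b, G.Adj a b
  · obtain ⟨a, b, hab⟩ := hE
    have : {v : α | ∀ w : α, ¬ G.Adj v w}.ncard < Nat.card G.ConnectedComponent := by
      rw [← Set.ncard_image_of_injOn hinj, ← Set.ncard_univ]
      apply Set.ncard_lt_ncard _ (Set.toFinite _)
      rw [Set.ssubset_univ_iff, Ne, Set.eq_univ_iff_forall]
      intro hall
      obtain ⟨v, hv, hva⟩ := hall (G.connectedComponentMk a)
      have hva' : v = a := reach_ind (fun w => v = w) (ConnectedComponent.exact hva) rfl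
        (fun c d hcd hac => absurd (hac ▸ hcd) (hv d))
      exact hv b (hva' ▸ hab)
    omega
  · exfalso
    push Not at hE
    have h1 : Fintype.card α ≤ Nat.card G.ConnectedComponent := by
      rw [← Nat.card_eq_fintype_card]
      exact Nat.card_le_card_of_injective G.connectedComponentMk
        (fun a b hab => hinj (hE a) (hE b) hab)
    have h2 : Nat.card H.ConnectedComponent ≤ 1 := by omega
    rw [Finite.card_le_one_iff_subsingleton] at h2
    exact hH (connected_iff _ |>.2 ⟨fun x y => ConnectedComponent.exact (Subsingleton.elim _ _), hne⟩)

end SuperposeAux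

/-- Let `H` be nonempty, without isolated vertices, and `|V(H)| ≤ |V(G)|`. Then there
is an injective `φ : V(H) ↪ V(G)` with `G ⊕_φ H` connected iff
`c(G) ≤ |V(H)| - c(H) + 1` and either (i) `H` is connected, or (ii) `H` is
disconnected and `i(G) ≤ |V(H)| - c(H)` (stated additively to avoid truncated
subtraction). -/
theorem stmt7 {α β : Type*} [Fintype α] [Fintype β]
    (G : SimpleGraph α) (H : SimpleGraph β)
    (hne : Nonempty β)
    (hiso : ∀ x : β, ∃ y : β, H.Adj x y)
    (hcard : Fintype.card β ≤ Fintype.card α) :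
    (∃ φ : β ↪ α, (superpose G H φ).Connected) ↔
      (Nat.card G.ConnectedComponent + Nat.card H.ConnectedComponent ≤
          Fintype.card β + 1 ∧
        (H.Connected ∨
          (¬ H.Connected ∧
            {v : α | ∀ w : α, ¬ G.Adj v w}.ncard + Nat.card H.ConnectedComponent ≤
              Fintype.card β))) := by
  constructor
  · rintro ⟨φ, h⟩
    have hc := SuperposeAux.card_le_of_connected _ _ (SuperposeAux.ig_connected_of G H hne φ h)
    refine ⟨hc, ?_⟩
    by_cases hH : H.Connected
    · exact Or.inl hH
    · exact Or.inr ⟨hH, SuperposeAux.isolated_bound G H hne hcard hc hH⟩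
  · rintro ⟨hc, -⟩
    exact SuperposeAux.exists_connected G H hne hcard hc
end

section
/- Let G be a connected finite simple graph with ℓ = p(G) ≥ 2 pendant biconnected components, let P₁, …, P_ℓ be the pendant biconnected components of G, and let v₁, …, v_ℓ be pairwise nonadjacent vertices with v_i ∈ V(P_i) for each i. Let H be a finite simple graph with exactly ℓ vertices such that every connected component of H contains at least 2 vertices. Then there exists a bijection φ : V(H) → {v₁, …, v_ℓ} such that the superposition F = G ⊕_φ H is edge 2-connected. -/
open SimpleGraph

/-- A graph is edge 2-connected if it is connected and has no bridge. -/
def TwoEdgeConnected {α : Type*} (G : SimpleGraph α) : Prop :=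
  G.Connected ∧ ∀ e : Sym2 α, ¬ G.IsBridge e

/-- A biconnected component `C` of `G` is pendant if exactly one bridge of `G` has an
endpoint in `C`. -/
def IsPendant {α : Type*} (G : SimpleGraph α)
    (C : (bicompGraph G).ConnectedComponent) : Prop :=
  ∃! e : Sym2 α, G.IsBridge e ∧ ∃ v ∈ C.supp, v ∈ e

namespace S12

/-- Abstract exchange argument on a family of pairwise compatible splits. -/
theorem exchange {ι β E : Type*} [Finite E] [Finite β] (H : SimpleGraph β)
    (hcomp : ∀ x : β, ∃ y : β, y ≠ x ∧ H.Reachable x y)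
    (s : E → ι → Prop)
    (hT : ∀ e, ∃ i, s e i) (hF : ∀ e, ∃ i, ¬ s e i)
    (hcompat : ∀ e f, e ≠ f → (∀ i j, s e i → s e j → (s f i ↔ s f j)) ∨
      (∀ i j, ¬ s e i → ¬ s e j → (s f i ↔ s f j)))
    (φ₀ : β ≃ ι) :
    ∃ φ : β ≃ ι, ∀ e, ∃ x y, H.Adj x y ∧ s e (φ x) ∧ ¬ s e (φ y) := by
  classical
  have hfin : Finite (β ≃ ι) := by
    have : Finite ι := Finite.of_equiv β φ₀
    infer_instance
  let cov : (β ≃ ι) → Set E := fun φ =>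
    {e | ∃ x y, H.Reachable x y ∧ ¬ (s e (φ x) ↔ s e (φ y))}
  have : Nonempty (β ≃ ι) := ⟨φ₀⟩
  obtain ⟨φ, hφ⟩ := Finite.exists_max (fun φ => (cov φ).ncard)
  have key : ∀ e, e ∈ cov φ := by
    intro e
    by_contra he
    have he' : ∀ x y, H.Reachable x y → (s e (φ x) ↔ s e (φ y)) := by
      intro x y h
      by_contra hc
      exact he ⟨x, y, h, hc⟩
    obtain ⟨i, hi⟩ := hT e
    obtain ⟨j, hj⟩ := hF e
    obtain ⟨x, rfl⟩ := φ.surjective i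
    obtain ⟨y, rfl⟩ := φ.surjective j
    have hxy : ¬ H.Reachable x y := fun h => hj ((he' x y h).1 hi)
    obtain ⟨x', hx', hrx⟩ := hcomp x
    obtain ⟨y', hy', hry⟩ := hcomp y
    have hx'y : x' ≠ y := by rintro rfl; exact hxy hrx
    have hy'x : y' ≠ x := by rintro rfl; exact hxy hry.symm
    let ψ : β ≃ ι := (Equiv.swap x y).trans φ
    have ψx : ψ x = φ y := by simp [ψ]
    have ψy : ψ y = φ x := by simp [ψ]
    have ψo : ∀ z, z ≠ x → z ≠ y → ψ z = φ z := by
      intro z h1 h2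
      simp [ψ, Equiv.swap_apply_of_ne_of_ne h1 h2]
    have h1 : e ∈ cov ψ := by
      refine ⟨x, x', hrx, ?_⟩
      rw [ψx, ψo x' hx' hx'y]
      have := he' x x' hrx
      tauto
    have h2 : cov φ ⊆ cov ψ := by
      rintro f ⟨a, b, hab, hfab⟩
      by_contra hf
      have hf' : ∀ x y, H.Reachable x y → (s f (ψ x) ↔ s f (ψ y)) := by
        intro x y h
        by_contra hc
        exact hf ⟨x, y, h, hc⟩
      have hef : e ≠ f := by
        rintro rfl
        exact hf h1
      by_cases hax : H.Reachable x a
      · have ha : s e (φ a) := (he' _ _ hax).1 hi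
        have hb : s e (φ b) := (he' _ _ hab).1 ha
        rcases hcompat e f hef with h | h
        · exact hfab (h _ _ ha hb)
        have hyy : s f (φ y) ↔ s f (φ y') := h _ _ hj (fun h => hj ((he' _ _ hry).2 h))
        have hxx : s f (φ x) ↔ s f (φ y') := by
          have := hf' y y' hry
          rwa [ψy, ψo y' hy'x hy'] at this
        have all : ∀ c, H.Reachable x c → (s f (φ c) ↔ s f (φ y)) := by
          intro c hc
          by_cases hcx : c = x
          · subst hcx; tauto
          · have := hf' x c hc
            rw [ψx, ψo c hcx (by rintro rfl; exact hxy hc)] at this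
            exact this.symm
        exact hfab ((all a hax).trans (all b (hax.trans hab)).symm)
      by_cases hay : H.Reachable y a
      · have ha : ¬ s e (φ a) := fun h => hj ((he' _ _ hay).2 h)
        have hb : ¬ s e (φ b) := fun h => ha ((he' _ _ hab).2 h)
        rcases hcompat e f hef with h | h
        swap
        · exact hfab (h _ _ ha hb)
        have hxx : s f (φ x) ↔ s f (φ x') := h _ _ hi ((he' _ _ hrx).1 hi)
        have hyy : s f (φ y) ↔ s f (φ x') := by
          have := hf' x x' hrx
          rwa [ψx, ψo x' hx' hx'y] at this
        have all : ∀ c, H.Reachable y c → (s f (φ c) ↔ s f (φ x)) := by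
          intro c hc
          by_cases hcx : c = y
          · subst hcx; tauto
          · have := hf' y c hc
            rw [ψy, ψo c (by rintro rfl; exact hxy hc.symm) hcx] at this
            exact this.symm
        exact hfab ((all a hay).trans (all b (hay.trans hab)).symm)
      have := hf' a b hab
      rw [ψo a (by rintro rfl; exact hax .rfl) (by rintro rfl; exact hay .rfl),
        ψo b (by rintro rfl; exact hax hab.symm) (by rintro rfl; exact hay hab.symm)] at this
      exact hfab this
    have h3 : cov φ ⊂ cov ψ := ⟨h2, fun h => he (h h1)⟩
    have := Set.ncard_lt_ncard h3 (Set.toFinite _)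
    exact absurd (hφ ψ) (not_le.2 this)
  refine ⟨φ, fun e => ?_⟩
  by_contra hcon
  push Not at hcon
  obtain ⟨x, y, ⟨p⟩, hxy⟩ := key e
  apply hxy
  clear hxy
  induction p with
  | nil => rfl
  | cons h p ih => exact Iff.trans ⟨hcon _ _ h, hcon _ _ h.symm⟩ ih

theorem avoid {α : Type*} {K : SimpleGraph α} {x w a b : α} (h : K.Reachable x w)
    (ha : ¬ K.Reachable x a) : (K.deleteEdges {s(a, b)}).Reachable x w := by
  obtain ⟨p⟩ := h
  rw [reachable_deleteEdges_iff_exists_walk]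
  refine ⟨p, fun hp => ha ?_⟩
  classical
  exact ⟨p.takeUntil a (p.fst_mem_support_of_mem_edges hp)⟩

theorem del_comm_le {α : Type*} (G : SimpleGraph α) (e f : Sym2 α) :
    (G.deleteEdges {f}).deleteEdges {e} ≤ G.deleteEdges {e} := by
  intro x y h
  simp only [deleteEdges_adj] at h ⊢
  exact ⟨h.1.1, h.2⟩

theorem bicomp_le {α : Type*} {G : SimpleGraph α} {e : Sym2 α} (he : G.IsBridge e) :
    bicompGraph G ≤ G.deleteEdges {e} := by
  intro x y h
  simp only [bicompGraph, deleteEdges_adj] at h ⊢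
  refine ⟨h.1, fun h' => h.2 ?_⟩
  rw [Set.mem_singleton_iff] at h'
  rw [h']
  exact he

theorem two_sides {α : Type*} {G : SimpleGraph α} (hG : G.Connected) (a b w : α) :
    (G.deleteEdges {s(a, b)}).Reachable a w ∨ (G.deleteEdges {s(a, b)}).Reachable b w := by
  obtain ⟨p⟩ := hG w a
  induction p with
  | nil => exact Or.inl .rfl
  | @cons u v w h p ih =>
    by_cases huv : s(u, v) = s(w, b)
    · rcases Sym2.eq_iff.1 huv with ⟨rfl, rfl⟩ | ⟨rfl, rfl⟩
      · exact Or.inl .rfl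
      · exact Or.inr .rfl
    · have : (G.deleteEdges {s(w, b)}).Adj v u := by
        rw [deleteEdges_adj]
        exact ⟨h.symm, fun h' => huv (by rw [Sym2.eq_swap]; exact h')⟩
      exact ih.imp (fun h => h.trans this.reachable) (fun h => h.trans this.reachable)

/-- Each side of a bridge contains a pendant component. -/
theorem side_pendant {α : Type*} [Finite α] {G : SimpleGraph α} (hG : G.Connected) :
    ∀ (n : ℕ) (a b : α), G.IsBridge s(a, b) →
      {w | (G.deleteEdges {s(a, b)}).Reachable a w}.ncard = n →
      ∃ C : (bicompGraph G).ConnectedComponent, IsPendant G C ∧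
        ∀ w ∈ C.supp, (G.deleteEdges {s(a, b)}).Reachable a w := by
  intro n
  induction n using Nat.strong_induction_on with
  | _ n ih =>
    intro a b hab hn
    by_cases hp : IsPendant G ((bicompGraph G).connectedComponentMk a)
    · refine ⟨_, hp, fun w hw => ?_⟩
      rw [ConnectedComponent.mem_supp_iff, ConnectedComponent.eq] at hw
      exact (hw.mono (bicomp_le hab)).symm
    · have : ∃ f, G.IsBridge f ∧ (∃ c, (bicompGraph G).Reachable a c ∧ c ∈ f) ∧ f ≠ s(a, b) := by
        by_contra hcon
        push Not at hcon
        apply hp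
        refine ⟨s(a, b), ⟨hab, a, rfl, by simp⟩, ?_⟩
        rintro f ⟨hf, c, hc, hcf⟩
        rw [ConnectedComponent.mem_supp_iff, ConnectedComponent.eq] at hc
        exact hcon f hf ⟨c, hc.symm, hcf⟩
      obtain ⟨f, hf, ⟨c, hac, hcf⟩, hne⟩ := this
      obtain ⟨d, rfl⟩ := Sym2.mem_iff_exists.1 hcf
      have hdc : G.IsBridge s(d, c) := by rwa [Sym2.eq_swap]
      have hadj : G.Adj c d := hf.reachable_iff_adj.1 (hG c d)
      have hnda : ¬ (G.deleteEdges {s(d, c)}).Reachable d a := fun h =>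
        hdc (h.trans (hac.mono (bicomp_le hdc)))
      have hsub : ∀ w, (G.deleteEdges {s(d, c)}).Reachable d w →
          (G.deleteEdges {s(a, b)}).Reachable a w := by
        intro w hw
        have h1 := (avoid (b := b) hw hnda).mono (del_comm_le _ _ _)
        have h2 : (G.deleteEdges {s(a, b)}).Adj c d := by
          rw [deleteEdges_adj]; exact ⟨hadj, hne⟩
        exact (hac.mono (bicomp_le hab)).trans (h2.reachable.trans h1)
      have hlt : {w | (G.deleteEdges {s(d, c)}).Reachable d w}.ncard < n := by
        rw [← hn]
        refine Set.ncard_lt_ncard ⟨hsub, fun h => hnda (h ?_)⟩ (Set.toFinite _)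
        exact Reachable.rfl
      obtain ⟨C, hC, hCw⟩ := ih _ hlt d c hdc rfl
      exact ⟨C, hC, fun w hw => hsub w (hCw w hw)⟩

theorem compat {α : Type*} {G : SimpleGraph α} (hG : G.Connected) (a b c d : α) :
    (∀ i j, (G.deleteEdges {s(a, b)}).Reachable a i → (G.deleteEdges {s(a, b)}).Reachable a j →
      ((G.deleteEdges {s(c, d)}).Reachable c i ↔ (G.deleteEdges {s(c, d)}).Reachable c j)) ∨
    (∀ i j, ¬ (G.deleteEdges {s(a, b)}).Reachable a i →
      ¬ (G.deleteEdges {s(a, b)}).Reachable a j →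
      ((G.deleteEdges {s(c, d)}).Reachable c i ↔ (G.deleteEdges {s(c, d)}).Reachable c j)) := by
  by_cases hc : (G.deleteEdges {s(a, b)}).Reachable a c
  · right
    intro i j hi hj
    have hi' := (two_sides hG a b i).resolve_left hi
    have hj' := (two_sides hG a b j).resolve_left hj
    have h : (G.deleteEdges {s(c, d)}).Reachable i j :=
      (avoid (hi'.symm.trans hj') (fun h => hi (hc.trans h.symm))).mono (del_comm_le _ _ _)
    exact ⟨fun h' => h'.trans h, fun h' => h'.trans h.symm⟩
  · left
    intro i j hi hj
    have h : (G.deleteEdges {s(c, d)}).Reachable i j :=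
      (avoid (hi.symm.trans hj) (fun h => hc (hi.trans h))).mono (del_comm_le _ _ _)
    exact ⟨fun h' => h'.trans h, fun h' => h'.trans h.symm⟩

end S12

/-- Let `G` be connected with pendant biconnected components `P 0, …, P (ℓ-1)`, `ℓ ≥ 2`,
and let `v i ∈ P i` be pairwise nonadjacent vertices. Let `H` have exactly `ℓ` vertices
with every connected component of `H` containing at least 2 vertices. Then there is an
injection `φ : V(H) ↪ V(G)` with range `{v 0, …, v (ℓ-1)}` (a bijection onto it) such
that `F = G ⊕_φ H` is edge 2-connected. -/
theorem stmt12 {α β : Type*} [Fintype α] [Fintype β]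
    (G : SimpleGraph α) (hG : G.Connected) (ℓ : ℕ) (hℓ : 2 ≤ ℓ)
    (P : Fin ℓ → (bicompGraph G).ConnectedComponent)
    (hPinj : Function.Injective P)
    (hPpend : ∀ i, IsPendant G (P i))
    (hPall : ∀ C : (bicompGraph G).ConnectedComponent, IsPendant G C → ∃ i, P i = C)
    (v : Fin ℓ → α) (hv : ∀ i, v i ∈ (P i).supp)
    (hvnadj : ∀ i j, i ≠ j → ¬ G.Adj (v i) (v j))
    (H : SimpleGraph β) (hcard : Fintype.card β = ℓ)
    (hcomp : ∀ x : β, ∃ y : β, y ≠ x ∧ H.Reachable x y) :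
    ∃ φ : β ↪ α, Set.range (⇑φ) = Set.range v ∧
      TwoEdgeConnected (superpose G H φ) := by
  classical
  have hrep : ∀ e : {e : Sym2 α // G.IsBridge e}, ∃ p : α × α, e.1 = s(p.1, p.2) := by
    rintro ⟨⟨a, b⟩, h⟩
    exact ⟨(a, b), rfl⟩
  choose r hr using hrep
  have hbr : ∀ e, G.IsBridge s((r e).1, (r e).2) := fun e => hr e ▸ e.2
  have hside : ∀ a b, G.IsBridge s(a, b) →
      ∃ i, (G.deleteEdges {s(a, b)}).Reachable a (v i) := by
    intro a b hab
    obtain ⟨C, hC, hw⟩ := S12.side_pendant hG _ a b hab rfl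
    obtain ⟨i, rfl⟩ := hPall C hC
    exact ⟨i, hw _ (hv i)⟩
  have φ₀ : β ≃ Fin ℓ := Fintype.equivFinOfCardEq hcard
  obtain ⟨φ, hφ⟩ := S12.exchange H hcomp
    (fun (e : {e : Sym2 α // G.IsBridge e}) i =>
      (G.deleteEdges {s((r e).1, (r e).2)}).Reachable (r e).1 (v i))
    (fun e => hside _ _ (hbr e))
    (fun e => by
      have h := hbr e
      rw [Sym2.eq_swap] at h
      obtain ⟨i, hi⟩ := hside _ _ h
      rw [Sym2.eq_swap] at hi
      exact ⟨i, fun hc => hbr e (hc.trans hi.symm)⟩)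
    (fun e f _ => by
      rcases S12.compat hG (r e).1 (r e).2 (r f).1 (r f).2 with h | h
      · exact Or.inl fun i j => h (v i) (v j)
      · exact Or.inr fun i j => h (v i) (v j))
    φ₀
  have hvinj : Function.Injective v := by
    intro i j hij
    apply hPinj
    have h1 := hv i
    have h2 := hv j
    rw [ConnectedComponent.mem_supp_iff] at h1 h2
    rw [← h1, ← h2, hij]
  refine ⟨⟨v ∘ φ, hvinj.comp φ.injective⟩, ?_, ?_⟩
  · change Set.range (v ∘ φ) = _
    exact φ.surjective.range_comp v
  set F := superpose G H ⟨v ∘ φ, hvinj.comp φ.injective⟩ with hF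
  have hGF : G ≤ F := le_sup_left
  have hFc : F.Connected := hG.mono hGF
  refine ⟨hFc, fun g hg => ?_⟩
  have hgG : G.IsBridge g := hg.anti hGF
  obtain ⟨x, y, hxy, hx, hy⟩ := hφ ⟨g, hgG⟩
  have hrg := hr ⟨g, hgG⟩
  generalize r ⟨g, hgG⟩ = q at hx hy hrg
  obtain ⟨a, b⟩ := q
  simp only at hx hy hrg
  subst hrg
  have hy' := (S12.two_sides hG a b (v (φ y))).resolve_left hy
  have hle : G.deleteEdges {s(a, b)} ≤ F.deleteEdges {s(a, b)} := by
    intro u w h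
    rw [deleteEdges_adj] at h ⊢
    exact ⟨hGF h.1, h.2⟩
  have hab : G.Adj a b := hgG.reachable_iff_adj.1 (hG a b)
  have hadj : (F.deleteEdges {s(a, b)}).Adj (v (φ x)) (v (φ y)) := by
    rw [deleteEdges_adj]
    refine ⟨?_, fun h => ?_⟩
    · exact Or.inr ((SimpleGraph.map_adj _ _ _ _).2 ⟨x, y, hxy, rfl, rfl⟩)
    · rw [Set.mem_singleton_iff] at h
      refine hvnadj (φ x) (φ y) (fun h => hxy.ne (φ.injective h)) ?_
      rw [← mem_edgeSet, h]
      exact hab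
  exact hg ((hx.mono hle).trans (hadj.reachable.trans (hy'.mono hle).symm))
end

section
/- Let G be a connected finite simple graph and let H be a matching graph with 2 ≤ p(G) ≤ |V(H)| ≤ |V(G)|. Then there exists an injective map φ : V(H) → V(G) such that the superposition F = G ⊕_φ H is edge 2-connected if and only if G is not isomorphic to a star K_{1,n} with n odd. -/
open SimpleGraph

/-- `p(G)`: the number of pendant biconnected components of `G`. -/
noncomputable def numPendant {α : Type*} (G : SimpleGraph α) : ℕ :=
  {C : (bicompGraph G).ConnectedComponent | IsPendant G C}.ncard

/-- A matching graph is a nonempty graph in which every vertex has exactly one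
neighbour (a disjoint union of copies of `K₂`). -/
def IsMatchingGraph {β : Type*} (H : SimpleGraph β) : Prop :=
  Nonempty β ∧ ∀ x : β, ∃! y : β, H.Adj x y


/-- Reachability after deleting a single edge. -/
def Rd {α : Type*} (G : SimpleGraph α) (f : Sym2 α) (u v : α) : Prop :=
  (G.deleteEdges {f}).Reachable u v

section basics
variable {α : Type*} {G : SimpleGraph α}

lemma Rd.rfl' {f : Sym2 α} {u : α} : Rd G f u u := Reachable.refl _

lemma Rd.symm' {f : Sym2 α} {u v : α} (h : Rd G f u v) : Rd G f v u := Reachable.symm h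

lemma Rd.trans' {f : Sym2 α} {u v w : α} (h : Rd G f u v) (h' : Rd G f v w) : Rd G f u w :=
  Reachable.trans h h'

lemma bridge_iff {u v : α} : G.IsBridge s(u, v) ↔ ¬ Rd G s(u, v) u v := Iff.rfl

lemma bridge_adj (hG : G.Connected) {u v : α} (h : G.IsBridge s(u, v)) : G.Adj u v :=
  h.reachable_iff_adj.1 (hG u v)

lemma Rd_of_adj {f : Sym2 α} {u v : α} (h : G.Adj u v) (hf : s(u, v) ≠ f) : Rd G f u v := by
  apply Adj.reachable
  rw [deleteEdges_adj]
  exact ⟨h, by simpa using hf⟩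

lemma Rd_ends (hG : G.Connected) (x y u : α) : Rd G s(x, y) u x ∨ Rd G s(x, y) u y := by
  obtain ⟨p⟩ := hG u x
  suffices H : ∀ z, G.Walk u z → (Rd G s(x, y) z x ∨ Rd G s(x, y) z y) →
      (Rd G s(x, y) u x ∨ Rd G s(x, y) u y) from H x p (Or.inl Rd.rfl')
  clear p
  intro z p hz
  induction p with
  | nil => exact hz
  | @cons a b c h p ih =>
    have ih := ih hz
    by_cases hf : s(a, b) = s(x, y)
    · rw [Sym2.eq_iff] at hf
      rcases hf with ⟨rfl, rfl⟩ | ⟨rfl, rfl⟩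
      · exact Or.inl Rd.rfl'
      · exact Or.inr Rd.rfl'
    · have := Rd_of_adj h hf
      exact ih.imp this.trans' this.trans'

lemma Rd_or {e f : Sym2 α} {a b : α} (h : Rd G e a b) :
    Rd G f a b ∨ ∀ p ∈ f, Rd G e a p := by
  obtain ⟨p⟩ := h
  induction p with
  | nil => exact Or.inl Rd.rfl'
  | @cons a b c h p ih =>
    have hab : Rd G e a b := h.reachable
    rcases ih with ih | ih
    · by_cases hf : s(a, b) = f
      · right
        subst hf
        intro p hp
        rcases Sym2.mem_iff.1 hp with rfl | rfl
        · exact Rd.rfl'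
        · exact hab
      · exact Or.inl ((Rd_of_adj (deleteEdges_le _ h) hf).trans' ih)
    · exact Or.inr fun p hp => hab.trans' (ih p hp)

lemma Rd_laminar {e f : Sym2 α} {a b c d : α} (hab : Rd G e a b) (hcd : Rd G e c d)
    (hac : ¬ Rd G e a c) (hf : ¬ Rd G f a b) : Rd G f c d := by
  have h1 := (Rd_or (f := f) hab).resolve_left hf
  rcases Rd_or (f := f) hcd with h | h
  · exact h
  · induction f with
    | h p q =>
      exact absurd ((h1 p (by simp)).trans' (h p (by simp)).symm') hac

end basics

/-- Every side of a bridge contains a pendant component. -/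
lemma exists_pendant {α : Type*} [Finite α] {G : SimpleGraph α} (hG : G.Connected) :
    ∀ (n : ℕ) (w w' : α), G.IsBridge s(w, w') → {v | Rd G s(w, w') w v}.ncard ≤ n →
      ∃ C : (bicompGraph G).ConnectedComponent, IsPendant G C ∧
        ∀ t ∈ C.supp, Rd G s(w, w') w t := by
  intro n
  have key : ∀ (h : Sym2 α), G.IsBridge h → ∀ u v, (bicompGraph G).Reachable u v → Rd G h u v := by
    intro h hh u v huv
    refine Reachable.mono ?_ huv
    exact deleteEdges_anti (by simpa using hh)
  induction n with
  | zero =>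
    intro w w' hb hn
    exfalso
    have : {v | Rd G s(w, w') w v} = ∅ := (Set.ncard_eq_zero (Set.toFinite _)).1 (by omega)
    have h2 : w ∈ {v | Rd G s(w, w') w v} := Rd.rfl'
    rw [this] at h2
    exact h2
  | succ n ih =>
    intro w w' hb hn
    by_cases hP : IsPendant G ((bicompGraph G).connectedComponentMk w)
    · refine ⟨_, hP, fun t ht => ?_⟩
      rw [ConnectedComponent.mem_supp_iff, ConnectedComponent.eq] at ht
      exact (key _ hb _ _ ht).symm'
    · have : ∃ h, (G.IsBridge h ∧ ∃ v ∈ ((bicompGraph G).connectedComponentMk w).supp, v ∈ h) ∧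
          h ≠ s(w, w') := by
        by_contra hcon
        push Not at hcon
        exact hP ⟨s(w, w'), ⟨hb, w, by simp, by simp⟩, fun h hh => hcon h hh⟩
      obtain ⟨h, ⟨hbh, v, hv, hvh⟩, hne⟩ := this
      rw [ConnectedComponent.mem_supp_iff, ConnectedComponent.eq] at hv
      obtain ⟨v', rfl⟩ := Sym2.mem_iff_exists.1 hvh
      have h1 : Rd G s(w, w') w v := (key _ hb _ _ hv).symm'
      have h2 : Rd G s(v, v') w v := (key _ hbh _ _ hv).symm'
      have hadj := bridge_adj hG hbh
      have h3 : Rd G s(w, w') w v' := h1.trans' (Rd_of_adj hadj hne)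
      have h4 : ¬ Rd G s(v, v') v' w := fun hc =>
        bridge_iff.1 hbh (h2.symm'.trans' hc.symm')
      have hsub : ∀ r, Rd G s(v, v') v' r → Rd G s(w, w') w r := by
        intro r hr
        rcases Rd_or (f := s(w, w')) hr with h | h
        · exact h3.trans' h
        · exact absurd (h w (by simp)) h4
      have hlt : {r | Rd G s(v', v) v' r}.ncard < {r | Rd G s(w, w') w r}.ncard := by
        apply Set.ncard_lt_ncard _ (Set.toFinite _)
        rw [Sym2.eq_swap]
        refine ⟨fun r hr => hsub r hr, fun hc => h4 (hc (?_ : w ∈ _))⟩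
        exact Rd.rfl'
      obtain ⟨C, hC, hC'⟩ := ih v' v (by rwa [Sym2.eq_swap]) (by omega)
      refine ⟨C, hC, fun t ht => hsub t ?_⟩
      rw [Sym2.eq_swap]
      exact hC' t ht

/-- The range of `φ` meets every side of every bridge. -/
def Hits {α β : Type*} (G : SimpleGraph α) (φ : β ↪ α) : Prop :=
  ∀ f, G.IsBridge f → ∀ u, ∃ i, Rd G f u (φ i)

lemma exists_hits {α β : Type*} [Fintype α] [Fintype β] {G : SimpleGraph α} (hG : G.Connected)
    (hpc : numPendant G ≤ Fintype.card β) (hcard : Fintype.card β ≤ Fintype.card α) :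
    ∃ φ : β ↪ α, Hits G φ := by
  classical
  let T : Set α := (fun C : (bicompGraph G).ConnectedComponent => C.out) ''
    {C | IsPendant G C}
  have hT : T.ncard ≤ Fintype.card β := (Set.ncard_image_le (Set.toFinite _)).trans hpc
  obtain ⟨S, hTS, -, hS⟩ := Finset.exists_subsuperset_card_eq (s := T.toFinset)
    (t := Finset.univ) (n := Fintype.card β) (Finset.subset_univ _)
    (by rwa [← Set.ncard_eq_toFinset_card']) (by simpa using hcard)
  have e : β ≃ S := Fintype.equivOfCardEq (by simp [hS])
  refine ⟨e.toEmbedding.trans (Function.Embedding.subtype _), ?_⟩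
  intro f hf u
  have main : ∀ w w', G.IsBridge s(w, w') → ∃ t ∈ T, Rd G s(w, w') w t := by
    intro w w' hb
    obtain ⟨C, hC, hC'⟩ := exists_pendant hG _ w w' hb le_rfl
    exact ⟨C.out, ⟨C, hC, rfl⟩, hC' _ (Quot.out_eq C)⟩
  have : ∃ t ∈ T, Rd G f u t := by
    induction f with
    | h x y =>
      rcases Rd_ends hG x y u with h | h
      · obtain ⟨t, ht, ht'⟩ := main x y hf
        exact ⟨t, ht, h.trans' ht'⟩
      · obtain ⟨t, ht, ht'⟩ := main y x (by rwa [Sym2.eq_swap])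
        rw [Sym2.eq_swap] at ht'
        exact ⟨t, ht, h.trans' ht'⟩
  obtain ⟨t, ht, htu⟩ := this
  refine ⟨e.symm ⟨t, hTS (by simpa using ht)⟩, ?_⟩
  simpa using htu

section matching
variable {α β : Type*} {H : SimpleGraph β}

lemma match_unique (hH : IsMatchingGraph H) {i j k : β} (h : H.Adj i j) (h' : H.Adj i k) :
    j = k := (hH.2 i).unique h h'

lemma swap_lemma (hH : IsMatchingGraph H) (φ : β ↪ α) {a b c d : α}
    (hab : (H.map φ).Adj a b) (hcd : (H.map φ).Adj c d) (hne : s(a, b) ≠ s(c, d)) :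
    ∃ φ' : β ↪ α, Set.range φ' = Set.range φ ∧ (H.map φ').Adj a c ∧ (H.map φ').Adj b d ∧
      ∀ u v, (H.map φ).Adj u v → s(u, v) ≠ s(a, b) → s(u, v) ≠ s(c, d) →
        (H.map φ').Adj u v := by
  classical
  rw [map_adj] at hab hcd
  obtain ⟨i, j, hij, rfl, rfl⟩ := hab
  obtain ⟨k, l, hkl, rfl, rfl⟩ := hcd
  have U := @match_unique _ H hH
  have hij' := hij.symm
  have hkl' := hkl.symm
  have n1 := hij.ne
  have n2 := hkl.ne
  have n3 : i ≠ k := by rintro rfl; rw [U hij hkl] at hne; exact hne rfl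
  have n4 : i ≠ l := by rintro rfl; rw [U hij hkl'] at hne; exact hne Sym2.eq_swap
  have n5 : j ≠ k := by rintro rfl; rw [U hij' hkl] at hne; exact hne Sym2.eq_swap
  have n6 : j ≠ l := by rintro rfl; rw [U hij' hkl'] at hne; exact hne rfl
  refine ⟨(Equiv.swap j k).toEmbedding.trans φ, ?_, ?_, ?_, ?_⟩
  · ext; simp [Function.Embedding.trans]
  · rw [map_adj]
    exact ⟨i, j, hij, by simp [Equiv.swap_apply_of_ne_of_ne n1 n3], by simp⟩
  · rw [map_adj]
    exact ⟨k, l, hkl, by simp, by simp [Equiv.swap_apply_of_ne_of_ne n6.symm n2.symm]⟩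
  · intro u v huv h1 h2
    rw [map_adj] at huv ⊢
    obtain ⟨m, n, hmn, rfl, rfl⟩ := huv
    have hmn' := hmn.symm
    have m1 : m ≠ j := by rintro rfl; rw [U hij' hmn] at h1; exact h1 Sym2.eq_swap
    have m2 : m ≠ k := by rintro rfl; rw [U hkl hmn] at h2; exact h2 rfl
    have m3 : n ≠ j := by rintro rfl; rw [U hij' hmn'] at h1; exact h1 rfl
    have m4 : n ≠ k := by rintro rfl; rw [U hkl hmn'] at h2; exact h2 Sym2.eq_swap
    exact ⟨m, n, hmn, by simp [Equiv.swap_apply_of_ne_of_ne m1 m2],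
      by simp [Equiv.swap_apply_of_ne_of_ne m3 m4]⟩

lemma move_lemma (hH : IsMatchingGraph H) (φ : β ↪ α) {x y z : α}
    (hxy : (H.map φ).Adj x y) (hz : z ∉ Set.range φ) :
    ∃ φ' : β ↪ α, (H.map φ').Adj z y ∧
      ∀ u v, (H.map φ).Adj u v → s(u, v) ≠ s(x, y) → (H.map φ').Adj u v := by
  classical
  rw [map_adj] at hxy
  obtain ⟨i, j, hij, rfl, rfl⟩ := hxy
  have U := @match_unique _ H hH
  have hz' : ∀ k, φ k ≠ z := fun k hk => hz ⟨k, hk⟩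
  refine ⟨φ.trans (Equiv.swap (φ i) z).toEmbedding, ?_, ?_⟩
  · rw [map_adj]
    refine ⟨i, j, hij, by simp, ?_⟩
    have : φ j ≠ φ i := fun h => hij.ne (φ.injective h).symm
    simp [Equiv.swap_apply_of_ne_of_ne this (hz' j)]
  · intro u v huv h1
    rw [map_adj] at huv ⊢
    obtain ⟨m, n, hmn, rfl, rfl⟩ := huv
    have m1 : φ m ≠ φ i := by
      intro h; have := φ.injective h; subst this; rw [U hij hmn] at h1; exact h1 rfl
    have m2 : φ n ≠ φ i := by
      intro h; have := φ.injective h; subst this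
      rw [U hij hmn.symm] at h1; exact h1 Sym2.eq_swap
    exact ⟨m, n, hmn, by simp [Equiv.swap_apply_of_ne_of_ne m1 (hz' m)],
      by simp [Equiv.swap_apply_of_ne_of_ne m2 (hz' n)]⟩

lemma map_unique (hH : IsMatchingGraph H) (φ : β ↪ α) {u v w : α}
    (h : (H.map φ).Adj u v) (h' : (H.map φ).Adj u w) : v = w := by
  rw [map_adj] at h h'
  obtain ⟨i, j, hij, rfl, rfl⟩ := h
  obtain ⟨k, l, hkl, hk, rfl⟩ := h'
  have := φ.injective hk
  subst this
  rw [match_unique hH hij hkl]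

lemma map_exists (hH : IsMatchingGraph H) (φ : β ↪ α) (i : β) :
    ∃ v, (H.map φ).Adj (φ i) v := by
  obtain ⟨j, hj, -⟩ := hH.2 i
  exact ⟨φ j, (map_adj _ _ _ _).2 ⟨i, j, hj, rfl, rfl⟩⟩

lemma card_even [Fintype β] (hH : IsMatchingGraph H) : Even (Fintype.card β) := by
  classical
  have h := H.sum_degrees_eq_twice_card_edges
  have : ∀ v, H.degree v = 1 := fun v => by
    rw [degree_eq_one_iff_existsUnique_adj]; exact hH.2 v
  simp only [this] at h
  simp at h
  exact ⟨_, by rw [h]; ring⟩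

end matching

/-- The bridge `f` is properly covered by the matching placed by `φ`. -/
def Cov {α β : Type*} (G : SimpleGraph α) (H : SimpleGraph β) (φ : β ↪ α) (f : Sym2 α) : Prop :=
  ∃ u v, (H.map φ).Adj u v ∧ ¬ Rd G f u v ∧ s(u, v) ≠ f

/-- `φ` is maximal: no other hitting map covers strictly more bridges. -/
def IsMaxPhi {α β : Type*} (G : SimpleGraph α) (H : SimpleGraph β) (φ : β ↪ α) : Prop :=
  Hits G φ ∧ ∀ φ' : β ↪ α, Hits G φ' →
    (∀ f, G.IsBridge f → Cov G H φ f → Cov G H φ' f) →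
    ∀ f, G.IsBridge f → Cov G H φ' f → Cov G H φ f

lemma exists_max {α β : Type*} [Finite α] [Finite β] {G : SimpleGraph α} {H : SimpleGraph β}
    {φ₀ : β ↪ α} (h₀ : Hits G φ₀) : ∃ φ : β ↪ α, IsMaxPhi G H φ := by
  classical
  have : Finite (β ↪ α) := inferInstance
  have : Nonempty {φ : β ↪ α // Hits G φ} := ⟨⟨φ₀, h₀⟩⟩
  obtain ⟨⟨φ, hφ⟩, hmax⟩ := Finite.exists_max
    (fun φ : {φ : β ↪ α // Hits G φ} => {f | G.IsBridge f ∧ Cov G H φ.1 f}.ncard)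
  refine ⟨φ, hφ, fun φ' hφ' hsub f hf hc => ?_⟩
  by_contra hcon
  have h1 := hmax ⟨φ', hφ'⟩
  have h2 : {f | G.IsBridge f ∧ Cov G H φ f}.ncard < {f | G.IsBridge f ∧ Cov G H φ' f}.ncard := by
    apply Set.ncard_lt_ncard _ (Set.toFinite _)
    exact ⟨fun f hf => ⟨hf.1, hsub f hf.1 hf.2⟩, fun hc' => hcon (hc' ⟨hf, hc⟩).2⟩
  exact absurd h1 (not_le.2 h2)

lemma Hits.of_range {α β : Type*} {G : SimpleGraph α} {φ φ' : β ↪ α} (h : Hits G φ)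
    (hr : Set.range φ' = Set.range φ) : Hits G φ' := by
  intro f hf u
  obtain ⟨i, hi⟩ := h f hf u
  obtain ⟨j, hj⟩ : φ i ∈ Set.range φ' := hr ▸ ⟨i, rfl⟩
  exact ⟨j, hj ▸ hi⟩

section improve
variable {α β : Type*} {G : SimpleGraph α} {H : SimpleGraph β} {φ : β ↪ α}

lemma case_one (hG : G.Connected) (hH : IsMatchingGraph H) (hm : IsMaxPhi G H φ)
    {e : Sym2 α} (he : G.IsBridge e) : ∃ u v, (H.map φ).Adj u v ∧ ¬ Rd G e u v := by
  by_contra hcon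
  push Not at hcon
  obtain ⟨x, y⟩ := e
  change G.IsBridge s(x, y) at he
  change ∀ u v, (H.map φ).Adj u v → Rd G s(x, y) u v at hcon
  obtain ⟨i, hi⟩ := hm.1 _ he x
  obtain ⟨k, hk⟩ := hm.1 _ he y
  obtain ⟨b, hb⟩ := map_exists hH φ i
  obtain ⟨d, hd⟩ := map_exists hH φ k
  generalize φ i = a at *
  generalize φ k = c at *
  have hab := hcon _ _ hb
  have hcd := hcon _ _ hd
  have hac : ¬ Rd G s(x, y) a c := fun h =>
    bridge_iff.1 he (hi.trans' (h.trans' hk.symm'))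
  have hbd : ¬ Rd G s(x, y) b d := fun h => hac (hab.trans' (h.trans' hcd.symm'))
  have had : ¬ Rd G s(x, y) a d := fun h => hac (h.trans' hcd.symm')
  have hca : ¬ Rd G s(x, y) c a := fun h => hac h.symm'
  have hne : s(a, b) ≠ s(c, d) := by
    intro h
    rw [Sym2.eq_iff] at h
    rcases h with ⟨rfl, rfl⟩ | ⟨rfl, rfl⟩
    · exact hac Rd.rfl'
    · exact had Rd.rfl'
  obtain ⟨φ', hr, h1, h2, h3⟩ := swap_lemma hH φ hb hd hne
  have par : ∀ {u v f}, f ≠ s(x, y) → G.IsBridge f → ¬ Rd G s(x, y) u v → s(u, v) ≠ f := by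
    rintro u v f hf hbf huv rfl
    exact huv (Rd_of_adj (bridge_adj hG hbf) hf)
  have hmain := hm.2 φ' (hm.1.of_range hr) ?_ s(x, y) he ?_
  · obtain ⟨u, v, huv, hn, -⟩ := hmain
    exact hn (hcon _ _ huv)
  · rintro f hf ⟨u, v, huv, hn, hp⟩
    have hfe : f ≠ s(x, y) := by rintro rfl; exact hn (hcon _ _ huv)
    have fin : ¬ Rd G f a c ∨ ¬ Rd G f b d → Cov G H φ' f := by
      rintro (h | h)
      · exact ⟨a, c, h1, h, par hfe hf hac⟩
      · exact ⟨b, d, h2, h, par hfe hf hbd⟩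
    by_cases hu1 : s(u, v) = s(a, b)
    · have hn' : ¬ Rd G f a b := by
        rw [Sym2.eq_iff] at hu1
        rcases hu1 with ⟨rfl, rfl⟩ | ⟨rfl, rfl⟩
        · exact hn
        · exact fun h => hn h.symm'
      have := Rd_laminar hab hcd hac hn'
      apply fin
      by_contra hcc
      push Not at hcc
      exact hn' (hcc.1.trans' (this.trans' hcc.2.symm'))
    by_cases hu2 : s(u, v) = s(c, d)
    · have hn' : ¬ Rd G f c d := by
        rw [Sym2.eq_iff] at hu2
        rcases hu2 with ⟨rfl, rfl⟩ | ⟨rfl, rfl⟩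
        · exact hn
        · exact fun h => hn h.symm'
      have := Rd_laminar hcd hab hca hn'
      apply fin
      by_contra hcc
      push Not at hcc
      exact hn' (hcc.1.symm'.trans' (this.trans' hcc.2))
    exact ⟨u, v, h3 u v huv hu1 hu2, hn, hp⟩
  · by_cases hp : s(a, c) = s(x, y)
    · refine ⟨b, d, h2, hbd, fun h => ?_⟩
      rw [← hp, Sym2.eq_iff] at h
      rcases h with ⟨rfl, rfl⟩ | ⟨rfl, rfl⟩
      · exact hb.ne rfl
      · exact hac hab
    · exact ⟨a, c, h1, hac, hp⟩

/-- In the maximal state, an uncovered bridge is an edge of the matching. -/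
lemma bad_mem (hG : G.Connected) (hH : IsMatchingGraph H) (hm : IsMaxPhi G H φ)
    {x y : α} (he : G.IsBridge s(x, y)) (hc : ¬ Cov G H φ s(x, y)) : (H.map φ).Adj x y := by
  obtain ⟨u, v, huv, hn⟩ := case_one hG hH hm he
  by_cases h : s(u, v) = s(x, y)
  · rw [← mem_edgeSet, h, mem_edgeSet] at huv
    exact huv
  · exact absurd ⟨u, v, huv, hn, h⟩ hc

lemma not_sep_sym {f : Sym2 α} {u v a b : α} (h : s(u, v) = s(a, b)) (hn : ¬ Rd G f u v) :
    ¬ Rd G f a b := by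
  rw [Sym2.eq_iff] at h
  rcases h with ⟨rfl, rfl⟩ | ⟨rfl, rfl⟩
  · exact hn
  · exact fun h => hn h.symm'

lemma sep_adj {f : Sym2 α} {a b : α} (h : G.Adj a b) (hn : ¬ Rd G f a b) : f = s(a, b) := by
  by_contra hc
  exact hn (Rd_of_adj h (Ne.symm hc))

lemma bad_surj (hG : G.Connected) (hH : IsMatchingGraph H) (hm : IsMaxPhi G H φ)
    {x y : α} (he : G.IsBridge s(x, y)) (hc : ¬ Cov G H φ s(x, y)) :
    Function.Surjective φ := by
  have hxy := bad_mem hG hH hm he hc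
  have hadj := bridge_adj hG he
  intro z
  by_contra hz
  -- choose to move the endpoint lying on the side of `z`
  have main : ∀ x y : α, G.IsBridge s(x, y) → ¬ Cov G H φ s(x, y) → (H.map φ).Adj x y →
      G.Adj x y → Rd G s(x, y) z x → False := by
    intro x y he hc hxy hadj hzx
    obtain ⟨φ', h1, h2⟩ := move_lemma hH φ (z := z) hxy (by simpa using hz)
    have hzy : ¬ Rd G s(x, y) z y := fun h => bridge_iff.1 he (hzx.symm'.trans' h)
    have hzx' : z ≠ x := by
      rintro rfl
      obtain ⟨i, j, -, hi, -⟩ := (map_adj _ _ _ _).1 hxy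
      exact hz ⟨i, hi⟩
    have hcov' : Cov G H φ' s(x, y) := by
      refine ⟨z, y, h1, hzy, fun h => ?_⟩
      rw [Sym2.eq_iff] at h
      rcases h with ⟨rfl, -⟩ | ⟨rfl, rfl⟩
      · exact hzx' rfl
      · exact hzx' rfl
    have keep : ∀ f u v, f ≠ s(x, y) → (H.map φ).Adj u v → ¬ Rd G f u v →
        (H.map φ').Adj u v := by
      intro f u v hf huv hn
      refine h2 u v huv fun h => hf (sep_adj hadj (not_sep_sym h hn))
    refine hc (hm.2 φ' ?_ ?_ _ he hcov')
    ·
      have hsep : ∀ f, G.IsBridge f → ∃ u v, (H.map φ').Adj u v ∧ ¬ Rd G f u v := by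
        intro f hf
        by_cases hfe : f = s(x, y)
        · subst hfe; exact ⟨z, y, h1, hzy⟩
        · obtain ⟨u, v, huv, hn⟩ := case_one hG hH hm hf
          exact ⟨u, v, keep f u v hfe huv hn, hn⟩
      intro f hf w
      obtain ⟨u, v, huv, hn⟩ := hsep f hf
      obtain ⟨i, j, -, rfl, rfl⟩ := (map_adj _ _ _ _).1 huv
      obtain ⟨p, q⟩ := f
      change ¬ Rd G s(p, q) _ _ at hn
      change ∃ i, Rd G s(p, q) _ _
      rcases Rd_ends hG p q (φ' i) with hi | hi <;> rcases Rd_ends hG p q (φ' j) with hj | hj <;>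
        rcases Rd_ends hG p q w with hw | hw
      · exact ⟨i, hw.trans' hi.symm'⟩
      · exact absurd (hi.trans' hj.symm') hn
      · exact ⟨i, hw.trans' hi.symm'⟩
      · exact ⟨j, hw.trans' hj.symm'⟩
      · exact ⟨j, hw.trans' hj.symm'⟩
      · exact ⟨i, hw.trans' hi.symm'⟩
      · exact absurd (hi.trans' hj.symm') hn
      · exact ⟨i, hw.trans' hi.symm'⟩
    · rintro f hf ⟨u, v, huv, hn, hp⟩
      by_cases hfe : f = s(x, y)
      · subst hfe; exact hcov'
      · exact ⟨u, v, keep f u v hfe huv hn, hn, hp⟩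
  rcases Rd_ends hG x y z with h | h
  · exact main x y he hc hxy hadj h
  · have hs : s(x, y) = s(y, x) := Sym2.eq_swap
    exact main y x (hs ▸ he) (hs ▸ hc) hxy.symm hadj.symm (hs ▸ h)

lemma bad_nbr (hG : G.Connected) (hH : IsMatchingGraph H) (hm : IsMaxPhi G H φ)
    {x y : α} (he : G.IsBridge s(x, y)) (hc : ¬ Cov G H φ s(x, y))
    {c d : α} (hcd : (H.map φ).Adj c d) (hne : s(x, y) ≠ s(c, d)) (hcx : Rd G s(x, y) c x) :
    G.IsBridge s(x, c) := by
  by_contra hnb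
  have hxy := bad_mem hG hH hm he hc
  have hadj := bridge_adj hG he
  obtain ⟨φ', hr, h1, h2, h3⟩ := swap_lemma hH φ hxy hcd hne
  have hcdR : Rd G s(x, y) c d := by
    by_contra h
    exact hc ⟨c, d, hcd, h, hne.symm⟩
  have hyd : ¬ Rd G s(x, y) y d := fun h =>
    bridge_iff.1 he (hcx.symm'.trans' (hcdR.trans' h.symm'))
  have hcov' : Cov G H φ' s(x, y) := by
    refine ⟨y, d, h2, hyd, fun h => ?_⟩
    have hdx : d = x := by
      rw [Sym2.eq_iff] at h
      rcases h with ⟨rfl, rfl⟩ | ⟨-, rfl⟩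
      · exact absurd hadj (by simp)
      · rfl
    subst hdx
    exact hne (by rw [map_unique hH φ hxy hcd.symm, Sym2.eq_swap])
  refine hc (hm.2 φ' (hm.1.of_range hr) ?_ _ he hcov')
  rintro f hf ⟨u, v, huv, hn, hp⟩
  by_cases hfe : f = s(x, y)
  · subst hfe; exact hcov'
  by_cases hu1 : s(u, v) = s(x, y)
  · exact absurd (sep_adj hadj (not_sep_sym hu1 hn)) hfe
  by_cases hu2 : s(u, v) = s(c, d)
  · have hn' := not_sep_sym hu2 hn
    have hxyf : Rd G f x y := Rd_of_adj hadj (Ne.symm hfe)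
    by_cases hxc : Rd G f x c
    · refine ⟨y, d, h2, fun h => hn' (hxc.symm'.trans' (hxyf.trans' h)), ?_⟩
      rintro rfl
      exact hyd (Rd_of_adj (bridge_adj hG hf) hfe)
    · refine ⟨x, c, h1, hxc, ?_⟩
      rintro rfl
      exact hnb hf
  exact ⟨u, v, h3 u v huv hu1 hu2, hn, hp⟩

lemma sym2_ne {a b c d : α} (h1 : a ≠ c) (h2 : a ≠ d) : s(a, b) ≠ s(c, d) := by
  intro h
  rw [Sym2.eq_iff] at h
  rcases h with h | h
  · exact h1 h.1
  · exact h2 h.1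

lemma sym2_ne' {a b c d : α} (h1 : b ≠ c) (h2 : b ≠ d) : s(a, b) ≠ s(c, d) := by
  rw [Sym2.eq_swap]
  exact sym2_ne h1 h2

lemma bad_double (hG : G.Connected) (hH : IsMatchingGraph H) (hm : IsMaxPhi G H φ)
    {x y : α} (he : G.IsBridge s(x, y)) (hc : ¬ Cov G H φ s(x, y))
    {c d c' d' : α} (hcd : (H.map φ).Adj c d) (hne : s(x, y) ≠ s(c, d))
    (hcx : Rd G s(x, y) c x)
    (hcd' : (H.map φ).Adj c' d') (hne' : s(x, y) ≠ s(c', d'))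
    (hcy : Rd G s(x, y) c' y) : False := by
  have hxy := bad_mem hG hH hm he hc
  have hadj := bridge_adj hG he
  have hR : ∀ {c d : α}, (H.map φ).Adj c d → s(x, y) ≠ s(c, d) → Rd G s(x, y) c d := by
    intro c d hcd hne
    by_contra h
    exact hc ⟨c, d, hcd, h, hne.symm⟩
  have hdx := (hR hcd hne).symm'.trans' hcx
  have hdy := (hR hcd' hne').symm'.trans' hcy
  have hnR := bridge_iff.1 he
  have hs : s(y, x) = s(x, y) := Sym2.eq_swap
  have bc := bad_nbr hG hH hm he hc hcd hne hcx
  have bd := bad_nbr hG hH hm he hc hcd.symm (by rwa [Sym2.eq_swap (a := d)]) hdx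
  have bc' := bad_nbr hG hH hm (x := y) (y := x) (hs ▸ he) (hs ▸ hc) hcd' (hs ▸ hne') (hs ▸ hcy)
  have bd' := bad_nbr hG hH hm (x := y) (y := x) (hs ▸ he) (hs ▸ hc) hcd'.symm
    (by rwa [Sym2.eq_swap (a := d'), hs]) (hs ▸ hdy)
  have ac := bridge_adj hG bc
  have ad := bridge_adj hG bd
  have ac' := bridge_adj hG bc'
  have ad' := bridge_adj hG bd'
  have n1 := hadj.ne
  have n2 := ac.ne
  have n3 := ad.ne
  have n4 := ac'.ne
  have n5 := ad'.ne
  have n6 := hcd.ne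
  have n7 := hcd'.ne
  have xs : ∀ {p q}, Rd G s(x, y) p x → Rd G s(x, y) q y → p ≠ q := by
    rintro p q hp hq rfl
    exact hnR (hp.symm'.trans' hq)
  have m1 := xs hcx hcy
  have m2 := xs hcx hdy
  have m3 := xs hdx hcy
  have m4 := xs hdx hdy
  have m5 := xs hcx Rd.rfl'
  have m6 := xs hdx Rd.rfl'
  have m7 := xs Rd.rfl' hcy
  have m8 := xs Rd.rfl' hdy
  obtain ⟨φ₁, hr₁, p1, p2, p3⟩ := swap_lemma hH φ hxy.symm hcd (by rwa [hs])
  have q1 := p3 _ _ hcd' (by rw [hs]; exact hne'.symm) (by first | (apply sym2_ne <;> first | assumption | (symm; assumption)) | (apply sym2_ne' <;> first | assumption | (symm; assumption)))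
  obtain ⟨φ', hr, r1, r2, r3⟩ := swap_lemma hH φ₁ p2 q1 (by first | (apply sym2_ne <;> first | assumption | (symm; assumption)) | (apply sym2_ne' <;> first | assumption | (symm; assumption)))
  have k1 : (H.map φ').Adj y c := r3 _ _ p1 (by first | (apply sym2_ne <;> first | assumption | (symm; assumption)) | (apply sym2_ne' <;> first | assumption | (symm; assumption))) (by first | (apply sym2_ne <;> first | assumption | (symm; assumption)) | (apply sym2_ne' <;> first | assumption | (symm; assumption)))
  have keep : ∀ u v, (H.map φ).Adj u v → s(u, v) ≠ s(x, y) → s(u, v) ≠ s(c, d) →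
      s(u, v) ≠ s(c', d') → (H.map φ').Adj u v := by
    intro u v huv e1 e2 e3
    refine r3 u v (p3 u v huv (by rwa [hs]) e2) ?_ e3
    intro h
    rw [← mem_edgeSet, h, mem_edgeSet] at huv
    exact m6 (map_unique hH φ huv hxy)
  have hcov' : Cov G H φ' s(x, y) := by
    refine ⟨y, c, k1, fun h => hnR (hcx.symm'.trans' h.symm'), by first | (apply sym2_ne <;> first | assumption | (symm; assumption)) | (apply sym2_ne' <;> first | assumption | (symm; assumption))⟩
  refine hc (hm.2 φ' (hm.1.of_range (hr.trans hr₁)) ?_ _ he hcov')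
  rintro f hf ⟨u, v, huv, hn, hp⟩
  by_cases hfe : f = s(x, y)
  · subst hfe; exact hcov'
  have hxyf : Rd G f x y := Rd_of_adj hadj (Ne.symm hfe)
  by_cases hu1 : s(u, v) = s(x, y)
  · exact absurd (sep_adj hadj (not_sep_sym hu1 hn)) hfe
  by_cases hu2 : s(u, v) = s(c, d)
  · have hn' := not_sep_sym hu2 hn
    by_cases hxc : Rd G f x c
    · have hxd : ¬ Rd G f x d := fun h => hn' (hxc.symm'.trans' h)
      have := sep_adj ad hxd
      subst this
      refine ⟨d, d', r2, fun h => hxd ?_, by first | (apply sym2_ne <;> first | assumption | (symm; assumption)) | (apply sym2_ne' <;> first | assumption | (symm; assumption))⟩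
      exact hxyf.trans' ((Rd_of_adj ad' (by first | (apply sym2_ne <;> first | assumption | (symm; assumption)) | (apply sym2_ne' <;> first | assumption | (symm; assumption)))).trans' h.symm')
    · have := sep_adj ac hxc
      subst this
      exact ⟨y, c, k1, fun h => hxc (hxyf.trans' h), by first | (apply sym2_ne <;> first | assumption | (symm; assumption)) | (apply sym2_ne' <;> first | assumption | (symm; assumption))⟩
  by_cases hu3 : s(u, v) = s(c', d')
  · have hn' := not_sep_sym hu3 hn
    by_cases hxc : Rd G f y c'
    · have hxd : ¬ Rd G f y d' := fun h => hn' (hxc.symm'.trans' h)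
      have := sep_adj ad' hxd
      subst this
      refine ⟨d, d', r2, fun h => hxd ?_, by first | (apply sym2_ne <;> first | assumption | (symm; assumption)) | (apply sym2_ne' <;> first | assumption | (symm; assumption))⟩
      exact hxyf.symm'.trans' ((Rd_of_adj ad (by first | (apply sym2_ne <;> first | assumption | (symm; assumption)) | (apply sym2_ne' <;> first | assumption | (symm; assumption)))).trans' h)
    · have := sep_adj ac' hxc
      subst this
      exact ⟨x, c', r1, fun h => hxc (hxyf.symm'.trans' h), by first | (apply sym2_ne <;> first | assumption | (symm; assumption)) | (apply sym2_ne' <;> first | assumption | (symm; assumption))⟩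
  exact ⟨u, v, keep u v huv hu1 hu2 hu3, hn, hp⟩

/-- In the maximal state an uncovered bridge forces a star all of whose edges are bridges. -/
lemma bad_star (hG : G.Connected) (hH : IsMatchingGraph H) (hm : IsMaxPhi G H φ)
    {x y : α} (he : G.IsBridge s(x, y)) (hc : ¬ Cov G H φ s(x, y)) :
    ∃ x, ∀ v, v ≠ x → G.IsBridge s(x, v) := by
  have hxy := bad_mem hG hH hm he hc
  have hsurj := bad_surj hG hH hm he hc
  have hs : s(y, x) = s(x, y) := Sym2.eq_swap
  have partner : ∀ v, v ≠ x → v ≠ y → ∃ d, (H.map φ).Adj v d ∧ s(x, y) ≠ s(v, d) := by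
    intro v h1 h2
    obtain ⟨i, rfl⟩ := hsurj v
    obtain ⟨d, hd⟩ := map_exists hH φ i
    exact ⟨d, hd, by grind⟩
  by_cases hA : ∃ v, v ≠ x ∧ v ≠ y ∧ Rd G s(x, y) v x
  · obtain ⟨c, h1, h2, h3⟩ := hA
    obtain ⟨d, hd, hd'⟩ := partner c h1 h2
    refine ⟨x, fun v hv => ?_⟩
    by_cases hvy : v = y
    · subst hvy; exact he
    obtain ⟨w, hw, hw'⟩ := partner v hv hvy
    rcases Rd_ends hG x y v with h | h
    · exact bad_nbr hG hH hm he hc hw hw' h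
    · exact (bad_double hG hH hm he hc hd hd' h3 hw hw' h).elim
  · push Not at hA
    refine ⟨y, fun v hv => ?_⟩
    by_cases hvx : v = x
    · subst hvx; rwa [hs]
    obtain ⟨w, hw, hw'⟩ := partner v hvx hv
    have h := (Rd_ends hG x y v).resolve_left (hA v hvx hv)
    exact bad_nbr hG hH hm (x := y) (y := x) (hs ▸ he) (hs ▸ hc) hw (hs ▸ hw') (hs ▸ h)

end improve

lemma star_iso {α : Type*} [Fintype α] {G : SimpleGraph α} (hG : G.Connected) {x : α}
    (hx : ∀ v, v ≠ x → G.IsBridge s(x, v)) (he : Even (Fintype.card α)) :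
    ∃ n : ℕ, Odd n ∧ Nonempty (G ≃g completeBipartiteGraph (Fin 1) (Fin n)) := by
  classical
  have hpos : 0 < Fintype.card α := Fintype.card_pos_iff.2 ⟨x⟩
  have hadj : ∀ u v, G.Adj u v ↔ (u = x ∧ v ≠ x) ∨ (u ≠ x ∧ v = x) := by
    intro u v
    constructor
    · intro h
      by_cases hu : u = x
      · left; exact ⟨hu, fun hv => h.ne (hu.trans hv.symm)⟩
      · by_cases hv : v = x
        · exact Or.inr ⟨hu, hv⟩
        · exfalso
          have h1 := bridge_iff.1 (hx v hv)
          have h2 := bridge_adj hG (hx u hu)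
          have n1 := h.ne
          exact h1 ((Rd_of_adj h2 (by grind)).trans' (Rd_of_adj h (by grind)))
    · rintro (⟨rfl, hv⟩ | ⟨hu, rfl⟩)
      · exact bridge_adj hG (hx v hv)
      · exact (bridge_adj hG (hx u hu)).symm
  refine ⟨Fintype.card α - 1, Nat.Even.sub_odd (by omega) he odd_one, ⟨?_⟩⟩
  have e1 : {v // v = x} ≃ Fin 1 := Fintype.equivFinOfCardEq (by simp)
  have e2 : {v // ¬ v = x} ≃ Fin (Fintype.card α - 1) := Fintype.equivFinOfCardEq (by
    rw [Fintype.card_subtype_compl]; simp)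
  let E : α ≃ Fin 1 ⊕ Fin (Fintype.card α - 1) :=
    (Equiv.sumCompl (fun v => v = x)).symm.trans (Equiv.sumCongr e1 e2)
  refine ⟨E, ?_⟩
  intro u v
  rw [hadj]
  have hl : ∀ w, (E w).isLeft ↔ w = x := by
    intro w
    by_cases hw : w = x
    · simp [E, hw, Equiv.sumCompl_symm_apply_of_pos]
    · simp [E, hw, Equiv.sumCompl_symm_apply_of_neg]
  have hrr : ∀ w, (E w).isRight ↔ ¬ w = x := by
    intro w
    rw [← hl w]; simp
  rw [completeBipartiteGraph_adj, hl, hl, hrr, hrr]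

lemma tec_of_cov {α β : Type*} {G : SimpleGraph α} (hG : G.Connected) {H : SimpleGraph β}
    {φ : β ↪ α} (h : ∀ f, G.IsBridge f → Cov G H φ f) : TwoEdgeConnected (superpose G H φ) := by
  have hle : G ≤ superpose G H φ := le_sup_left
  refine ⟨hG.mono hle, fun e he => ?_⟩
  have hb := he.anti hle
  obtain ⟨u, v, huv, hn, hp⟩ := h e hb
  obtain ⟨x, y⟩ := e
  change ¬ Rd (superpose G H φ) s(x, y) x y at he
  change ¬ Rd G s(x, y) u v at hn
  change s(u, v) ≠ s(x, y) at hp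
  have lift : ∀ {a b}, Rd G s(x, y) a b → Rd (superpose G H φ) s(x, y) a b := by
    intro a b hab
    exact Reachable.mono (deleteEdges_mono hle) hab
  have huv' : Rd (superpose G H φ) s(x, y) u v := Rd_of_adj (Or.inr huv) hp
  rcases Rd_ends hG x y u with hi | hi <;> rcases Rd_ends hG x y v with hj | hj
  · exact hn (hi.trans' hj.symm')
  · exact he ((lift hi).symm'.trans' (huv'.trans' (lift hj)))
  · exact he ((lift hj).symm'.trans' (huv'.symm'.trans' (lift hi)))
  · exact hn (hi.trans' hj.symm')

/-- A vertex with at most one neighbour destroys edge 2-connectivity. -/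
lemma not_tec_of_leaf {α : Type*} {F : SimpleGraph α} {l c : α} (hlc : l ≠ c)
    (h : ∀ v, F.Adj l v → v = c) : ¬ TwoEdgeConnected F := by
  rintro ⟨-, hF⟩
  apply hF s(l, c)
  rw [isBridge_iff]
  rintro ⟨p⟩
  cases p with
  | nil => exact hlc rfl
  | cons hadj p =>
    rw [deleteEdges_adj] at hadj
    have := h _ hadj.1
    subst this
    exact hadj.2 rfl

lemma star_no {α β : Type*} [Fintype α] [Fintype β] {G : SimpleGraph α} {H : SimpleGraph β}
    (hH : IsMatchingGraph H) (hcard : Fintype.card β ≤ Fintype.card α) {n : ℕ} (hn : Odd n)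
    (E : G ≃g completeBipartiteGraph (Fin 1) (Fin n)) (φ : β ↪ α)
    (hF : TwoEdgeConnected (superpose G H φ)) : False := by
  classical
  let c : α := E.symm (Sum.inl 0)
  have hadj : ∀ u v, u ≠ c → G.Adj u v → v = c := by
    intro u v hu huv
    have h := (E.map_adj_iff).2 huv
    have hEc : ∀ w, (E w).isLeft → w = c := by
      intro w hw
      apply E.injective
      obtain ⟨a, ha⟩ := Sum.isLeft_iff.1 hw
      rw [ha]
      simp [c]
      exact Subsingleton.elim _ _
    rw [completeBipartiteGraph_adj] at h
    rcases h with h | h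
    · exact absurd (hEc u h.1) hu
    · exact hEc v h.2
  -- every leaf is in the range and is not matched with the centre
  have key : ∀ l, l ≠ c → ∃ i, φ i = l ∧ ∃ v, (H.map φ).Adj l v ∧ v ≠ c := by
    intro l hl
    by_contra hcon
    refine not_tec_of_leaf hl ?_ hF
    intro v hv
    rcases hv with hv | hv
    · exact hadj l v hl hv
    · by_contra hvc
      obtain ⟨i, j, -, hi, -⟩ := (map_adj _ _ _ _).1 hv
      exact hcon ⟨i, hi, v, hv, hvc⟩
  have hcα : Fintype.card α = n + 1 := by
    rw [Fintype.card_congr E.toEquiv]; simp; omega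
  have hcr : c ∉ Set.range φ := by
    rintro ⟨i, hi⟩
    obtain ⟨v, hv⟩ := map_exists hH φ i
    rw [hi] at hv
    obtain ⟨j, -, w, hw, hwc⟩ := key v hv.ne.symm
    exact hwc (map_unique hH φ hw hv.symm)
  have himg : Finset.univ.map φ = Finset.univ.erase c := by
    ext v
    simp only [Finset.mem_map, Finset.mem_univ, true_and, Finset.mem_erase, and_true]
    constructor
    · rintro ⟨i, rfl⟩ h
      exact hcr ⟨i, h⟩
    · intro hv
      obtain ⟨i, hi, -⟩ := key v hv
      exact ⟨i, hi⟩
  have := congrArg Finset.card himg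
  rw [Finset.card_map, Finset.card_erase_of_mem (Finset.mem_univ _), Finset.card_univ,
    Finset.card_univ, hcα] at this
  have hev := card_even hH
  rw [this] at hev
  simp at hev
  exact (Nat.not_even_iff_odd.2 hn) hev


/-- Let `G` be connected and `H` a matching graph with `2 ≤ p(G) ≤ |V(H)| ≤ |V(G)|`.
Then there is an injective `φ : V(H) ↪ V(G)` with `F = G ⊕_φ H` edge 2-connected iff
`G` is not isomorphic to a star `K_{1,n}` with `n` odd. -/
theorem stmt14 {α β : Type*} [Fintype α] [Fintype β]
    (G : SimpleGraph α) (hG : G.Connected)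
    (H : SimpleGraph β) (hH : IsMatchingGraph H)
    (h2 : 2 ≤ numPendant G) (hpc : numPendant G ≤ Fintype.card β)
    (hcard : Fintype.card β ≤ Fintype.card α) :
    (∃ φ : β ↪ α, TwoEdgeConnected (superpose G H φ)) ↔
      ¬ ∃ n : ℕ, Odd n ∧ Nonempty (G ≃g completeBipartiteGraph (Fin 1) (Fin n)) := by
  constructor
  · rintro ⟨φ, hF⟩ ⟨n, hn, ⟨E⟩⟩
    exact star_no hH hcard hn E φ hF
  · intro hns
    obtain ⟨φ₀, h₀⟩ := exists_hits (G := G) hG hpc hcard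
    obtain ⟨φ, hm⟩ := exists_max (H := H) h₀
    refine ⟨φ, tec_of_cov hG fun f hf => ?_⟩
    by_contra hc
    obtain ⟨x, y⟩ := f
    have hsurj := bad_surj hG hH hm hf hc
    obtain ⟨z, hz⟩ := bad_star hG hH hm hf hc
    have hcards : Fintype.card β = Fintype.card α :=
      Fintype.card_of_bijective ⟨φ.injective, hsurj⟩
    exact hns (star_iso hG hz (hcards ▸ card_even hH))
end

section
/- Let G and H be finite simple graphs with 2 ≤ p(G) ≤ |V(H)| ≤ |V(G)| such that G is connected, H has no isolated vertices, and H has a connected component with at least 3 vertices. Then there exists an injective map φ : V(H) → V(G) such that the superposition F = G ⊕_φ H is edge 2-connected. -/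
open SimpleGraph

namespace SP

/-- `u` and `v` lie on the same side of `e`. -/
def RR {α : Type*} (G : SimpleGraph α) (e : Sym2 α) (u v : α) : Prop :=
  (G.deleteEdges {e}).Reachable u v

section basic
variable {α : Type*} {G : SimpleGraph α}

lemma rr_refl (e : Sym2 α) (u : α) : RR G e u u := Reachable.refl u
lemma RR.symm {e : Sym2 α} {u v : α} (h : RR G e u v) : RR G e v u := Reachable.symm h
lemma RR.trans {e : Sym2 α} {u v w : α} (h : RR G e u v) (h' : RR G e v w) : RR G e u w :=
  Reachable.trans h h'

lemma rr_of_adj {e : Sym2 α} {u v : α} (h : G.Adj u v) (hne : s(u, v) ≠ e) : RR G e u v := by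
  apply Adj.reachable
  simp [h, hne]

lemma adj_of_bridge (hG : G.Connected) {a b : α} (h : G.IsBridge s(a, b)) : G.Adj a b :=
  h.reachable_iff_adj.1 (hG.preconnected a b)

lemma rr_of_bridge (hG : G.Connected) {e : Sym2 α} {u v : α} (h : G.IsBridge s(u, v))
    (hne : s(u, v) ≠ e) : RR G e u v := rr_of_adj (adj_of_bridge hG h) hne

lemma not_rr {a b : α} (h : G.IsBridge s(a, b)) : ¬ RR G s(a, b) a b := h

lemma rr_end (hG : G.Connected) (a b w : α) : RR G s(a, b) a w ∨ RR G s(a, b) b w := by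
  obtain ⟨p⟩ := hG.preconnected w a
  induction p with
  | nil => exact Or.inl (rr_refl _ _)
  | @cons u v w h p ih =>
    by_cases he : s(u, v) = s(w, b)
    · rcases Sym2.eq_iff.1 he with ⟨rfl, rfl⟩ | ⟨rfl, rfl⟩
      · exact Or.inl (rr_refl _ _)
      · exact Or.inr (rr_refl _ _)
    · have h1 := (rr_of_adj h he).symm
      exact ih.imp (fun h => h.trans h1) (fun h => h.trans h1)

lemma rr_two (hG : G.Connected) {e : Sym2 α} {u v : α} (w : α) (h : ¬ RR G e u v) :
    RR G e u w ∨ RR G e v w := by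
  induction e with
  | h a b =>
    have h1 := rr_end hG a b u
    have h2 := rr_end hG a b v
    have h3 := rr_end hG a b w
    rcases h1 with h1 | h1 <;> rcases h2 with h2 | h2 <;> rcases h3 with h3 | h3
    · exact absurd (h1.symm.trans h2) h
    · exact absurd (h1.symm.trans h2) h
    · exact Or.inl (h1.symm.trans h3)
    · exact Or.inr (h2.symm.trans h3)
    · exact Or.inr (h2.symm.trans h3)
    · exact Or.inl (h1.symm.trans h3)
    · exact absurd (h1.symm.trans h2) h
    · exact absurd (h1.symm.trans h2) h

lemma rr_lam {e e' : Sym2 α} {u v c : α} (h : RR G e u v) (h' : ¬ RR G e' u v) (hc : c ∈ e') :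
    RR G e c v := by
  obtain ⟨p⟩ := h
  induction p with
  | nil => exact absurd (rr_refl _ _) h'
  | @cons u v w h p ih =>
    by_cases he : s(u, v) = e'
    · subst he
      rcases Sym2.mem_iff.1 hc with rfl | rfl
      · exact (Adj.reachable h).trans ⟨p⟩
      · exact ⟨p⟩
    · apply ih
      intro h2
      exact h' ((rr_of_adj (deleteEdges_le _ h) he).trans h2)

lemma bicomp_rr {e : Sym2 α} (he : G.IsBridge e) {u v : α} (h : (bicompGraph G).Reachable u v) :
    RR G e u v := by
  refine Reachable.mono ?_ h
  apply deleteEdges_anti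
  simpa using he

lemma exists_pendant [Fintype α] (hG : G.Connected) (n : ℕ) : ∀ (e : Sym2 α) (a : α),
    G.IsBridge e → {w | RR G e a w}.ncard ≤ n →
    ∃ C : (bicompGraph G).ConnectedComponent, IsPendant G C ∧ ∀ v ∈ C.supp, RR G e a v := by
  induction n with
  | zero =>
    intro e a he h
    have : a ∈ {w | RR G e a w} := rr_refl _ _
    have := (Set.ncard_pos (Set.toFinite _)).2 ⟨a, this⟩
    omega
  | succ n ih =>
    intro e a he hn
    obtain ⟨b, hb, hab⟩ : ∃ b ∈ e, RR G e a b := by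
      induction e with
      | h x y =>
        rcases rr_end hG x y a with h | h
        · exact ⟨x, by simp, h.symm⟩
        · exact ⟨y, by simp, h.symm⟩
    by_cases hp : IsPendant G ((bicompGraph G).connectedComponentMk b)
    · refine ⟨_, hp, fun v hv => ?_⟩
      have hv' : (bicompGraph G).Reachable v b := by
        simpa [ConnectedComponent.mem_supp_iff] using hv
      exact hab.trans (bicomp_rr he hv').symm
    · have : ∃ g, G.IsBridge g ∧ g ≠ e ∧
          ∃ c ∈ ((bicompGraph G).connectedComponentMk b).supp, c ∈ g := by
        by_contra hcon
        push Not at hcon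
        apply hp
        refine ⟨e, ⟨he, b, by simp, hb⟩, ?_⟩
        rintro g ⟨hg, c, hc, hcg⟩
        by_contra hne
        exact hcon g hg hne c hc hcg
      obtain ⟨g, hg, hne, c, hc, hcg⟩ := this
      have hcb : (bicompGraph G).Reachable c b := by
        simpa [ConnectedComponent.mem_supp_iff] using hc
      obtain ⟨d, rfl⟩ := Sym2.mem_iff_exists.1 hcg
      have hgcb := bicomp_rr hg hcb
      have hecb := bicomp_rr he hcb
      have hecd := rr_of_bridge hG hg hne
      have hsub : ∀ w, RR G s(c, d) d w → RR G e a w := by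
        intro w hw
        have : RR G e d w := by
          by_contra hcon
          have h1 := rr_lam hw hcon hb
          exact not_rr hg (hgcb.trans (h1.trans hw.symm))
        exact hab.trans (hecb.symm.trans (hecd.trans this))
      have hlt : {w | RR G s(c, d) d w}.ncard < {w | RR G e a w}.ncard := by
        apply Set.ncard_lt_ncard _ (Set.toFinite _)
        refine ⟨hsub, fun hh => ?_⟩
        have : RR G s(c, d) d b := hh hab
        exact not_rr hg (hgcb.trans this.symm)
      obtain ⟨C, hC, hC'⟩ := ih s(c, d) d hg (by omega)
      exact ⟨C, hC, fun v hv => hsub v (hC' v hv)⟩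

end basic

section exch
variable {α β : Type*} {G : SimpleGraph α} {H : SimpleGraph β}

/-- Some edge of `H` crosses `e`. -/
def Crossed (G : SimpleGraph α) (H : SimpleGraph β) (φ : β ↪ α) (e : Sym2 α) : Prop :=
  ∃ x y, H.Adj x y ∧ ¬ RR G e (φ x) (φ y)

/-- Some edge of `H` crosses `e` and is different from `e`. -/
def Good (G : SimpleGraph α) (H : SimpleGraph β) (φ : β ↪ α) (e : Sym2 α) : Prop :=
  ∃ x y, H.Adj x y ∧ ¬ RR G e (φ x) (φ y) ∧ s(φ x, φ y) ≠ e

lemma Good.crossed {φ : β ↪ α} {e : Sym2 α} (h : Good G H φ e) : Crossed G H φ e := by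
  obtain ⟨x, y, h, h', _⟩ := h
  exact ⟨x, y, h, h'⟩

/-- `φ` with the images of `x` and `y` exchanged. -/
noncomputable def sw (φ : β ↪ α) (x y : β) : β ↪ α :=
  open Classical in (Equiv.swap x y).toEmbedding.trans φ

lemma sw_left (φ : β ↪ α) (x y : β) : sw φ x y x = φ y := by simp [sw]
lemma sw_right (φ : β ↪ α) (x y : β) : sw φ x y y = φ x := by simp [sw]
lemma sw_of_ne (φ : β ↪ α) {x y t : β} (h : t ≠ x) (h' : t ≠ y) : sw φ x y t = φ t := by
  classical
  simp [sw, Equiv.swap_apply_of_ne_of_ne h h']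
lemma sw_range (φ : β ↪ α) (x y : β) : Set.range (sw φ x y) = Set.range φ := by
  classical
  ext a
  simp only [sw, Function.Embedding.trans_apply, Equiv.toEmbedding_apply, Set.mem_range]
  exact (Equiv.swap x y).exists_congr_left.trans (by simp)

lemma rr_sw {φ : β ↪ α} {e : Sym2 α} {x y : β} (h : RR G e (φ x) (φ y)) (t : β) :
    RR G e (φ t) (sw φ x y t) := by
  by_cases h1 : t = x
  · subst h1; rw [sw_left]; exact h
  by_cases h2 : t = y
  · subst h2; rw [sw_right]; exact h.symm
  rw [sw_of_ne φ h1 h2]; exact rr_refl _ _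

lemma not_rr_sw {φ : β ↪ α} {e : Sym2 α} {x y : β} (h : RR G e (φ x) (φ y)) {s t : β}
    (hst : ¬ RR G e (φ s) (φ t)) : ¬ RR G e (sw φ x y s) (sw φ x y t) :=
  fun hh => hst ((rr_sw h s).trans (hh.trans (rr_sw h t).symm))

lemma crossed_sw {φ : β ↪ α} {e : Sym2 α} {x y : β} (h : RR G e (φ x) (φ y))
    (hc : Crossed G H φ e) : Crossed G H (sw φ x y) e := by
  obtain ⟨s, t, hst, hn⟩ := hc
  exact ⟨s, t, hst, not_rr_sw h hn⟩

/-- Phase 1 exchange. -/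
lemma phase1 (hG : G.Connected) (hiso : ∀ x : β, ∃ y : β, H.Adj x y) (φ : β ↪ α)
    (hS : ∀ e a, G.IsBridge e → ∃ x, RR G e a (φ x)) {e : Sym2 α} (he : G.IsBridge e)
    (hne : ¬ Crossed G H φ e) :
    ∃ ψ : β ↪ α, Set.range ψ = Set.range φ ∧ Crossed G H ψ e ∧
      ∀ e', G.IsBridge e' → Crossed G H φ e' → Crossed G H ψ e' := by
  have hno : ∀ x y, H.Adj x y → RR G e (φ x) (φ y) := by
    intro x y hxy
    by_contra hh
    exact hne ⟨x, y, hxy, hh⟩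
  induction e with
  | h a b =>
  obtain ⟨p, hp⟩ := hS _ a he
  obtain ⟨q, hq⟩ := hS _ b he
  obtain ⟨p', hpp⟩ := hiso p
  obtain ⟨q', hqq⟩ := hiso q
  have hp' := hp.trans (hno _ _ hpp)
  have hq' := hq.trans (hno _ _ hqq)
  have hab := not_rr he
  have hp'p : p' ≠ p := hpp.ne'
  have hq'q : q' ≠ q := hqq.ne'
  have hp'q : p' ≠ q := by rintro rfl; exact hab (hp'.trans hq.symm)
  have hq'p : q' ≠ p := by rintro rfl; exact hab (hp.trans hq'.symm)
  have e1 := sw_left φ p q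
  have e2 := sw_right φ p q
  have e3 := sw_of_ne φ hp'p hp'q
  have e4 := sw_of_ne φ hq'p hq'q
  refine ⟨sw φ p q, sw_range _ _ _, ⟨p, p', hpp, ?_⟩, ?_⟩
  · rw [e1, e3]
    intro hh
    exact hab (hp'.trans (hh.symm.trans hq.symm))
  · intro e' he' hc
    by_cases hee : s(a, b) = e'
    · subst hee; exact absurd hc hne
    by_cases hpq : RR G e' (φ p) (φ q)
    · exact crossed_sw hpq hc
    have hab' := rr_of_bridge hG he hee
    obtain ⟨c, hc'⟩ : ∃ c, c ∈ e' := by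
      induction e' with
      | h x y => exact ⟨x, by simp⟩
    by_cases h1 : RR G e' a (φ p)
    · have h2 : ¬ RR G e' b (φ q) := fun h2 => hpq (h1.symm.trans (hab'.trans h2))
      have h3 : RR G e' a (φ p') := by
        by_contra h3
        exact hab (hp'.trans ((rr_lam hp' h3 hc').symm.trans ((rr_lam hq h2 hc').trans hq.symm)))
      refine ⟨p, p', hpp, ?_⟩
      rw [e1, e3]
      intro hh
      exact h2 (hab'.symm.trans (h3.trans hh.symm))
    · have h3 : RR G e' b (φ q') := by
        by_contra h3
        exact hab (hp.trans ((rr_lam hp h1 hc').symm.trans ((rr_lam hq' h3 hc').trans hq'.symm)))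
      refine ⟨q, q', hqq, ?_⟩
      rw [e2, e4]
      intro hh
      exact h1 (hab'.trans (h3.trans hh.symm))

/-- Phase 2, first exchange. -/
lemma phase2a (hG : G.Connected) (φ : β ↪ α) {x y t : β} (hxy : H.Adj x y) (hyt : H.Adj y t)
    (htx : t ≠ x) (he : G.IsBridge s(φ x, φ y)) (hbad : ¬ Good G H φ s(φ x, φ y)) :
    Good G H (sw φ x y) s(φ x, φ y) ∧
    (∀ e', G.IsBridge e' → e' ≠ s(φ x, φ y) → Crossed G H φ e' → Crossed G H (sw φ x y) e') ∧
    (∀ e', G.IsBridge e' → Good G H φ e' → Good G H (sw φ x y) e') := by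
  have hno : ∀ s t, H.Adj s t → s(φ s, φ t) ≠ s(φ x, φ y) → RR G s(φ x, φ y) (φ s) (φ t) := by
    intro s t hst hne
    by_contra hh
    exact hbad ⟨s, t, hst, hh, hne⟩
  have hsep := not_rr he
  refine ⟨⟨y, t, hyt, ?_, ?_⟩, ?_, ?_⟩
  · rw [sw_right, sw_of_ne φ htx hyt.ne']
    intro hh
    have := hno y t hyt (by
      intro h
      rcases Sym2.eq_iff.1 h with ⟨h1, h2⟩ | ⟨h1, h2⟩
      · exact hxy.ne' (φ.injective h1)
      · exact htx (φ.injective h2))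
    exact hsep (hh.trans this.symm)
  · rw [sw_right, sw_of_ne φ htx hyt.ne']
    intro h
    rcases Sym2.eq_iff.1 h with ⟨h1, h2⟩ | ⟨h1, h2⟩
    · exact hyt.ne' (φ.injective h2)
    · exact htx (φ.injective h2)
  · intro e' he' hne hc
    exact crossed_sw (rr_of_bridge hG he hne.symm) hc
  · intro e' he' hg
    by_cases hne : e' = s(φ x, φ y)
    · subst hne; exact absurd hg hbad
    have hR := rr_of_bridge hG he (Ne.symm hne)
    obtain ⟨s, r, hsr, hn, hn2⟩ := hg
    refine ⟨s, r, hsr, not_rr_sw hR hn, ?_⟩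
    intro heq
    have key : ∀ s r, H.Adj s r → (s = x ∨ s = y) → ¬ s(sw φ x y s, sw φ x y r) = e' := by
      rintro s r hsr (rfl | rfl) heq
      · have hr1 : r ≠ s := hsr.ne'
        by_cases hr2 : r = y
        · subst hr2
          rw [sw_left, sw_right, Sym2.eq_swap] at heq
          exact hne heq.symm
        rw [sw_left, sw_of_ne φ hr1 hr2] at heq
        subst heq
        have h1 := rr_of_bridge hG he' hne
        have h2 := hno s r hsr (by
          intro h
          rcases Sym2.eq_iff.1 h with ⟨h1, h2⟩ | ⟨h1, h2⟩
          · exact hr2 (φ.injective h2)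
          · exact hr1 (φ.injective h2))
        exact hsep (h2.trans h1.symm)
      · have hr1 : r ≠ s := hsr.ne'
        by_cases hr2 : r = x
        · subst hr2
          rw [sw_left, sw_right] at heq
          exact hne heq.symm
        rw [sw_right, sw_of_ne φ hr2 hr1] at heq
        subst heq
        have h1 := rr_of_bridge hG he' hne
        have h2 := hno s r hsr (by
          intro h
          rcases Sym2.eq_iff.1 h with ⟨h1, h2⟩ | ⟨h1, h2⟩
          · exact hr1 (φ.injective h2)
          · exact hr2 (φ.injective h2))
        exact hsep (h1.trans h2.symm)
    by_cases hs : s = x ∨ s = y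
    · exact key s r hsr hs heq
    by_cases hr : r = x ∨ r = y
    · exact key r s hsr.symm hr (by rw [Sym2.eq_swap]; exact heq)
    push Not at hs hr
    rw [sw_of_ne φ hs.1 hs.2, sw_of_ne φ hr.1 hr.2] at heq
    exact hn2 heq

/-- Phase 2, second exchange, up to bridges at the new place of `z`. -/
lemma phase2b (hG : G.Connected) (φ : β ↪ α) {x y z : β} (hxy : H.Adj x y)
    (hx : ∀ t, H.Adj x t → t = y) (hy : ∀ t, H.Adj y t → t = x) (hzx : z ≠ x) (hzy : z ≠ y)
    (he : G.IsBridge s(φ x, φ y))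
    (hside : RR G s(φ x, φ y) (φ y) (φ z)) :
    Good G H (sw φ y z) s(φ x, φ y) ∧
    (∀ e', G.IsBridge e' → Crossed G H φ e' → Crossed G H (sw φ y z) e') ∧
    (∀ e', G.IsBridge e' → Good G H φ e' → Good G H (sw φ y z) e' ∨
      ∃ t, H.Adj z t ∧ e' = s(sw φ y z t, sw φ y z z)) := by
  have hsep := not_rr he
  have ex := sw_of_ne φ hxy.ne hzx.symm
  have ey := sw_left φ y z
  have ez := sw_right φ y z
  have g0 : Good G H (sw φ y z) s(φ x, φ y) := by
    refine ⟨x, y, hxy, ?_, ?_⟩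
    · rw [ex, ey]
      exact fun h => hsep (h.trans hside.symm)
    · rw [ex, ey]
      intro h
      rcases Sym2.eq_iff.1 h with ⟨h1, h2⟩ | ⟨h1, h2⟩
      · exact hzy (φ.injective h2)
      · exact hzx (φ.injective h2)
  have hxz : ∀ e', G.IsBridge e' → e' ≠ s(φ x, φ y) → s(φ x, φ z) ≠ e' := by
    rintro e' he' hne rfl
    have := rr_of_bridge hG he' hne
    exact hsep (this.trans hside.symm)
  have g1 : ∀ e', G.IsBridge e' → e' ≠ s(φ x, φ y) → ¬ RR G e' (φ y) (φ z) →
      Good G H (sw φ y z) e' := by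
    intro e' he' hne hn
    refine ⟨x, y, hxy, ?_, ?_⟩
    · rw [ex, ey]
      exact fun h => hn ((rr_of_bridge hG he hne.symm).symm.trans h)
    · rw [ex, ey]
      exact hxz e' he' hne
  refine ⟨g0, ?_, ?_⟩
  · intro e' he' hc
    by_cases hne : e' = s(φ x, φ y)
    · subst hne; exact g0.crossed
    by_cases hR : RR G e' (φ y) (φ z)
    · exact crossed_sw hR hc
    · exact (g1 e' he' hne hR).crossed
  · intro e' he' hg
    by_cases hne : e' = s(φ x, φ y)
    · subst hne; exact Or.inl g0
    by_cases hR : RR G e' (φ y) (φ z)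
    swap
    · exact Or.inl (g1 e' he' hne hR)
    obtain ⟨s, r, hsr, hn, hn2⟩ := hg
    by_cases heq : s(sw φ y z s, sw φ y z r) = e'
    swap
    · exact Or.inl ⟨s, r, hsr, not_rr_sw hR hn, heq⟩
    right
    by_cases h1 : s = z
    · subst h1; exact ⟨r, hsr, by rw [← heq, Sym2.eq_swap]⟩
    by_cases h2 : r = z
    · subst h2; exact ⟨s, hsr.symm, by rw [← heq]⟩
    exfalso
    by_cases h3 : s = y
    · subst h3
      obtain rfl := hy r hsr
      rw [ex, ey, Sym2.eq_swap] at heq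
      exact hxz e' he' hne heq
    by_cases h4 : r = y
    · subst h4
      obtain rfl := hy s hsr.symm
      rw [ex, ey] at heq
      exact hxz e' he' hne heq
    rw [sw_of_ne φ h3 h1, sw_of_ne φ h4 h2] at heq
    exact hn2 heq

/-- Phase 2: any valid placement with a bad bridge can be improved. -/
lemma phase2 (hG : G.Connected) (hz : ∃ z z1 z2 : β, z1 ≠ z2 ∧ H.Adj z z1 ∧ H.Adj z z2)
    (φ : β ↪ α) (hcr : ∀ e, G.IsBridge e → Crossed G H φ e) {e : Sym2 α} (he : G.IsBridge e)
    (hbad : ¬ Good G H φ e) :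
    ∃ ψ : β ↪ α, (∀ e, G.IsBridge e → Crossed G H ψ e) ∧ Good G H ψ e ∧
      ∀ e', G.IsBridge e' → Good G H φ e' → Good G H ψ e' := by
  have A : ∀ (φ : β ↪ α), (∀ e, G.IsBridge e → Crossed G H φ e) → ∀ x y t, H.Adj x y →
      H.Adj y t → t ≠ x → G.IsBridge s(φ x, φ y) → ¬ Good G H φ s(φ x, φ y) →
      (∀ e, G.IsBridge e → Crossed G H (sw φ x y) e) ∧ Good G H (sw φ x y) s(φ x, φ y) ∧
      ∀ e', G.IsBridge e' → Good G H φ e' → Good G H (sw φ x y) e' := by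
    intro φ hcr x y t hxy hyt htx he hbad
    obtain ⟨h1, h2, h3⟩ := phase2a hG φ hxy hyt htx he hbad
    refine ⟨fun e' he' => ?_, h1, h3⟩
    by_cases hne : e' = s(φ x, φ y)
    · subst hne; exact h1.crossed
    · exact h2 e' he' hne (hcr e' he')
  have B : ∀ x y z z1 z2, z1 ≠ z2 → H.Adj z z1 → H.Adj z z2 → H.Adj x y →
      (∀ t, H.Adj x t → t = y) → (∀ t, H.Adj y t → t = x) → z ≠ x → z ≠ y →
      G.IsBridge s(φ x, φ y) → RR G s(φ x, φ y) (φ y) (φ z) →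
      ∃ ψ : β ↪ α, (∀ e, G.IsBridge e → Crossed G H ψ e) ∧ Good G H ψ s(φ x, φ y) ∧
      ∀ e', G.IsBridge e' → Good G H φ e' → Good G H ψ e' := by
    intro x y z z1 z2 h12 hz1 hz2 hxy hx hy hzx hzy he hside
    obtain ⟨h1, h2, h3⟩ := phase2b hG φ hxy hx hy hzx hzy he hside
    have hcr' : ∀ e, G.IsBridge e → Crossed G H (sw φ y z) e :=
      fun e' he' => h2 e' he' (hcr e' he')
    by_cases hall : ∀ e', G.IsBridge e' → Good G H φ e' → Good G H (sw φ y z) e'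
    · exact ⟨sw φ y z, hcr', h1, hall⟩
    push Not at hall
    obtain ⟨e', he', hg, hng⟩ := hall
    obtain ⟨t, hzt, rfl⟩ := (h3 e' he' hg).resolve_left hng
    obtain ⟨t', hzt', htt'⟩ : ∃ t', H.Adj z t' ∧ t' ≠ t := by
      by_cases h : z1 = t
      · exact ⟨z2, hz2, fun h' => h12 (h.trans h'.symm)⟩
      · exact ⟨z1, hz1, h⟩
    set φ1 := sw φ y z with hφ1
    clear_value φ1
    obtain ⟨k1, k2, k3⟩ := A φ1 hcr' t z t' hzt.symm hzt' htt' he' hng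
    refine ⟨_, k1, k3 _ he h1, ?_⟩
    intro e2 he2 hg2
    rcases h3 e2 he2 hg2 with h | ⟨r, hzr, rfl⟩
    · exact k3 e2 he2 h
    by_cases hrt : r = t
    · subst hrt; exact k2
    have hne : s(φ1 t, φ1 z) ≠ s(φ1 r, φ1 z) := by
      intro h
      rcases Sym2.eq_iff.1 h with ⟨h1, h2⟩ | ⟨h1, h2⟩
      · exact hrt (φ1.injective h1).symm
      · exact hzt.ne' (φ1.injective h1)
    refine ⟨z, r, hzr, ?_, ?_⟩
    · rw [sw_right, sw_of_ne φ1 hrt hzr.ne']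
      intro hh
      exact not_rr he2 (hh.symm.trans (rr_of_bridge hG he' hne))
    · rw [sw_right, sw_of_ne φ1 hrt hzr.ne']
      intro h
      rcases Sym2.eq_iff.1 h with ⟨h1, h2⟩ | ⟨h1, h2⟩
      · exact hrt (φ1.injective h1).symm
      · exact hzt.ne' (φ1.injective h1)
  obtain ⟨x, y, hxy, hn⟩ := hcr e he
  have hexy : s(φ x, φ y) = e := by
    by_contra hh
    exact hbad ⟨x, y, hxy, hn, hh⟩
  subst hexy
  by_cases hy : ∀ t, H.Adj y t → t = x
  swap
  · push Not at hy
    obtain ⟨t, hyt, htx⟩ := hy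
    exact ⟨_, A φ hcr x y t hxy hyt htx he hbad⟩
  by_cases hx : ∀ t, H.Adj x t → t = y
  swap
  · push Not at hx
    obtain ⟨t, hxt, hty⟩ := hx
    rw [Sym2.eq_swap] at he hbad ⊢
    exact ⟨_, A φ hcr y x t hxy.symm hxt hty he hbad⟩
  obtain ⟨z, z1, z2, h12, hz1, hz2⟩ := hz
  have hzx : z ≠ x := by
    rintro rfl
    exact h12 ((hx _ hz1).trans (hx _ hz2).symm)
  have hzy : z ≠ y := by
    rintro rfl
    exact h12 ((hy _ hz1).trans (hy _ hz2).symm)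
  rcases rr_two hG (φ z) (not_rr he) with h | h
  · rw [Sym2.eq_swap] at he h ⊢
    exact B y x z z1 z2 h12 hz1 hz2 hxy.symm hy hx hzy hzx he h
  · exact B x y z z1 z2 h12 hz1 hz2 hxy hx hy hzx hzy he h

/-- An iteration principle: if every failure can be repaired without creating new ones,
all can be repaired. -/
lemma iterate {ι Φ : Type*} [Finite ι] (V : Φ → Prop) (P : Φ → ι → Prop)
    (hstep : ∀ φ i, V φ → ¬ P φ i → ∃ ψ, V ψ ∧ P ψ i ∧ ∀ j, P φ j → P ψ j)
    (φ : Φ) (hφ : V φ) : ∃ ψ, V ψ ∧ ∀ i, P ψ i := by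
  suffices h : ∀ n : ℕ, ∀ φ, V φ → {i | ¬ P φ i}.ncard ≤ n → ∃ ψ, V ψ ∧ ∀ i, P ψ i from
    h _ φ hφ le_rfl
  intro n
  induction n with
  | zero =>
    intro φ hφ h
    refine ⟨φ, hφ, fun i => ?_⟩
    by_contra hi
    have := (Set.ncard_pos (Set.toFinite {i | ¬ P φ i})).2 ⟨i, hi⟩
    omega
  | succ n ih =>
    intro φ hφ h
    by_cases hall : ∀ i, P φ i
    · exact ⟨φ, hφ, hall⟩
    push Not at hall
    obtain ⟨i, hi⟩ := hall
    obtain ⟨ψ, hψ, h1, h2⟩ := hstep φ i hφ hi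
    apply ih ψ hψ
    have : {i | ¬ P ψ i}.ncard < {i | ¬ P φ i}.ncard := by
      apply Set.ncard_lt_ncard _ (Set.toFinite _)
      exact ⟨fun j hj hh => hj (h2 j hh), fun hh => hh hi h1⟩
    omega

lemma exists_deg_two
    (h3 : ∃ x y z : β, x ≠ y ∧ x ≠ z ∧ y ≠ z ∧ H.Reachable x y ∧ H.Reachable x z) :
    ∃ z z1 z2 : β, z1 ≠ z2 ∧ H.Adj z z1 ∧ H.Adj z z2 := by
  by_contra hcon
  push Not at hcon
  have key : ∀ x y, H.Reachable x y → x = y ∨ H.Adj x y := by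
    rintro x y ⟨p⟩
    induction p with
    | nil => exact Or.inl rfl
    | @cons u v w h p ih =>
      rcases ih with rfl | ih
      · exact Or.inr h
      · left
        by_contra hne
        exact hcon v u w hne h.symm ih
  obtain ⟨x, y, z, hxy, hxz, hyz, h1, h2⟩ := h3
  exact hcon x y z hyz ((key _ _ h1).resolve_left hxy) ((key _ _ h2).resolve_left hxz)

lemma twoEdge_of_good (hG : G.Connected) (φ : β ↪ α)
    (h : ∀ e, G.IsBridge e → Good G H φ e) : TwoEdgeConnected (superpose G H φ) := by
  have hle : G ≤ superpose G H φ := le_sup_left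
  refine ⟨hG.mono hle, fun e he => ?_⟩
  have heG : G.IsBridge e := he.anti hle
  obtain ⟨x, y, hxy, hn, hne⟩ := h e heG
  have hmono : ∀ u v, RR G e u v → RR (superpose G H φ) e u v := fun u v h =>
    Reachable.mono (deleteEdges_mono hle) h
  have hF : RR (superpose G H φ) e (φ x) (φ y) := by
    apply rr_of_adj _ hne
    right
    exact ⟨fun h => hxy.ne (φ.injective h), x, y, hxy, rfl, rfl⟩
  induction e with
  | h a b =>
    apply not_rr he
    rcases rr_end hG a b (φ x) with h1 | h1 <;> rcases rr_end hG a b (φ y) with h2 | h2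
    · exact absurd (h1.symm.trans h2) hn
    · exact (hmono _ _ h1).trans (hF.trans (hmono _ _ h2).symm)
    · exact (hmono _ _ h2).trans (hF.symm.trans (hmono _ _ h1).symm)
    · exact absurd (h1.symm.trans h2) hn

lemma exists_start [Fintype α] [Fintype β] (hG : G.Connected)
    (hpc : numPendant G ≤ Fintype.card β) (hcard : Fintype.card β ≤ Fintype.card α) :
    ∃ φ : β ↪ α, ∀ e a, G.IsBridge e → ∃ x, RR G e a (φ x) := by
  classical
  let S : Set α := Set.image Quot.out {C : (bicompGraph G).ConnectedComponent | IsPendant G C}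
  have hS : S.toFinset.card ≤ Fintype.card β := by
    rw [← Set.ncard_eq_toFinset_card']
    exact (Set.ncard_image_le (Set.toFinite _)).trans hpc
  obtain ⟨T, hST, -, hT⟩ := Finset.exists_subsuperset_card_eq (Finset.subset_univ S.toFinset) hS
    (by simpa using hcard)
  have hc : Fintype.card β = Fintype.card T := by simp [hT]
  let f : β ≃ T := Fintype.equivOfCardEq hc
  refine ⟨f.toEmbedding.trans (Function.Embedding.subtype _), fun e a he => ?_⟩
  obtain ⟨C, hC, hC'⟩ := exists_pendant hG _ e a he le_rfl
  have hmem : C.out ∈ T := hST (by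
    rw [Set.mem_toFinset]
    exact ⟨C, hC, rfl⟩)
  refine ⟨f.symm ⟨C.out, hmem⟩, ?_⟩
  have : RR G e a C.out := hC' _ (by
    rw [ConnectedComponent.mem_supp_iff]
    exact Quot.out_eq C)
  simpa using this

end exch

end SP

/-- Let `G` be connected with `2 ≤ p(G) ≤ |V(H)| ≤ |V(G)|`, let `H` have no isolated
vertices and have a connected component with at least 3 vertices. Then there is an
injective `φ : V(H) ↪ V(G)` such that `F = G ⊕_φ H` is edge 2-connected. -/
theorem stmt15 {α β : Type*} [Fintype α] [Fintype β]
    (G : SimpleGraph α) (hG : G.Connected) (H : SimpleGraph β)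
    (h2 : 2 ≤ numPendant G) (hpc : numPendant G ≤ Fintype.card β)
    (hcard : Fintype.card β ≤ Fintype.card α)
    (hiso : ∀ x : β, ∃ y : β, H.Adj x y)
    (h3 : ∃ x y z : β, x ≠ y ∧ x ≠ z ∧ y ≠ z ∧ H.Reachable x y ∧ H.Reachable x z) :
    ∃ φ : β ↪ α, TwoEdgeConnected (superpose G H φ) := by
  obtain ⟨φ₀, h₀⟩ := SP.exists_start hG hpc hcard
  obtain ⟨φ₁, -, h₁⟩ := SP.iterate (ι := {e : Sym2 α // G.IsBridge e})
    (fun φ : β ↪ α => ∀ e a, G.IsBridge e → ∃ x, SP.RR G e a (φ x))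
    (fun φ e => SP.Crossed G H φ e.1) (by
      rintro φ ⟨e, he⟩ hφ hne
      obtain ⟨ψ, hr, h1, h2⟩ := SP.phase1 hG hiso φ hφ he hne
      refine ⟨ψ, fun e' a he' => ?_, h1, fun j hj => h2 j.1 j.2 hj⟩
      obtain ⟨x, hx⟩ := hφ e' a he'
      obtain ⟨y, hy⟩ : φ x ∈ Set.range ψ := hr ▸ Set.mem_range_self x
      exact ⟨y, hy ▸ hx⟩) φ₀ h₀
  obtain ⟨φ₂, -, h₂⟩ := SP.iterate (ι := {e : Sym2 α // G.IsBridge e})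
    (fun φ : β ↪ α => ∀ e, G.IsBridge e → SP.Crossed G H φ e)
    (fun φ e => SP.Good G H φ e.1) (by
      rintro φ ⟨e, he⟩ hφ hne
      obtain ⟨ψ, h1, h2, h3'⟩ := SP.phase2 hG (SP.exists_deg_two h3) φ hφ he hne
      exact ⟨ψ, h1, h2, fun j hj => h3' j.1 j.2 hj⟩) φ₁ (fun e he => h₁ ⟨e, he⟩)
  exact ⟨φ₂, SP.twoEdge_of_good hG φ₂ (fun e he => h₂ ⟨e, he⟩)⟩
end

section
/- Let G and H be finite simple graphs such that G is connected, H is nonempty, H has no isolated vertices, and |V(H)| ≤ |V(G)|. Then there exists an injective map φ : V(H) → V(G) such that the superposition F = G ⊕_φ H is edge 2-connected if and only if both of the following hold: (1) G is edge 2-connected, or G is not edge 2-connected and p(G) ≤ |V(H)|; and (2) it is not the case that G is isomorphic to a star K_{1,n} with n odd and H is a matching graph. -/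
open SimpleGraph

/-- `A` is one side of a bridge `uv`: `uv` is the only edge leaving `A`. -/
def Cut {α : Type*} (G : SimpleGraph α) (A : Set α) (u v : α) : Prop :=
  u ∈ A ∧ v ∉ A ∧ G.Adj u v ∧ ∀ a ∈ A, ∀ b, b ∉ A → G.Adj a b → a = u ∧ b = v

lemma reach_boundary {α : Type*} {G : SimpleGraph α} {A : Set α} {a b : α}
    (h : G.Reachable a b) (ha : a ∈ A) (hb : b ∉ A) :
    ∃ x ∈ A, ∃ y, y ∉ A ∧ G.Adj x y := by
  obtain ⟨p⟩ := h
  induction p with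
  | nil => exact absurd ha hb
  | @cons x y z hxy p ih =>
    by_cases hy : y ∈ A
    · exact ih hy hb
    · exact ⟨x, ha, y, hy, hxy⟩

lemma Cut.compl {α : Type*} {G : SimpleGraph α} {A : Set α} {u v : α} (h : Cut G A u v) :
    Cut G Aᶜ v u := by
  obtain ⟨h1, h2, h3, h4⟩ := h
  refine ⟨h2, fun h => h h1, h3.symm, ?_⟩
  intro a ha b hb hab
  have hb' : b ∈ A := by simpa using hb
  exact (h4 b hb' a ha hab.symm).symm

lemma bridge_iff_cut {α : Type*} {G : SimpleGraph α} (hG : G.Connected) {u v : α} :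
    G.IsBridge s(u, v) ↔ ∃ A, Cut G A u v := by
  constructor
  · intro h
    have hadj : G.Adj u v := h.reachable_iff_adj.1 (hG.preconnected u v)
    rw [isBridge_iff] at h
    refine ⟨{w | (G.deleteEdges {s(u, v)}).Reachable u w}, Reachable.refl _, h, hadj, ?_⟩
    intro a ha b hb hab
    by_cases he : s(a, b) = s(u, v)
    · rcases Sym2.eq_iff.1 he with h1 | h1
      · exact h1
      · exact absurd (h1.1 ▸ ha) h
    · exfalso
      apply hb
      have : (G.deleteEdges {s(u, v)}).Adj a b := by
        rw [deleteEdges_adj]; exact ⟨hab, he⟩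
      exact Reachable.trans ha this.reachable
  · rintro ⟨A, h1, h2, h3, h4⟩
    rw [isBridge_iff]
    intro hr
    obtain ⟨x, hx, y, hy, hxy⟩ := reach_boundary hr h1 h2
    rw [deleteEdges_adj] at hxy
    obtain ⟨rfl, rfl⟩ := h4 x hx y hy hxy.1
    exact hxy.2 rfl

lemma bridge_not_reach {α : Type*} {G : SimpleGraph α} {a b : α} (h : G.IsBridge s(a, b)) :
    ¬ (bicompGraph G).Reachable a b := by
  intro hr
  apply h
  refine hr.mono ?_
  intro x y hxy
  rw [bicomp_adj] at hxy
  rw [deleteEdges_adj]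
  refine ⟨hxy.1, ?_⟩
  intro h'
  rw [Set.mem_singleton_iff] at h'
  exact hxy.2 (h' ▸ h)

lemma bicomp_reach_cut {α : Type*} {G : SimpleGraph α} (hG : G.Connected) {A : Set α} {u v a b : α}
    (h : Cut G A u v) (hr : (bicompGraph G).Reachable a b) (ha : a ∈ A) : b ∈ A := by
  by_contra hb
  obtain ⟨x, hx, y, hy, hxy⟩ := reach_boundary hr ha hb
  rw [bicomp_adj] at hxy
  obtain ⟨rfl, rfl⟩ := h.2.2.2 x hx y hy hxy.1
  exact hxy.2 ((bridge_iff_cut hG).2 ⟨A, h⟩)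

lemma mem_supp_iff_reach {α : Type*} {G : SimpleGraph α} {a b : α} :
    a ∈ (G.connectedComponentMk b).supp ↔ G.Reachable a b := by
  rw [ConnectedComponent.mem_supp_iff, ConnectedComponent.eq]

lemma supp_reach {α : Type*} {G : SimpleGraph α} {C : G.ConnectedComponent} {a b : α}
    (ha : a ∈ C.supp) (hb : b ∈ C.supp) : G.Reachable a b := by
  rw [ConnectedComponent.mem_supp_iff] at ha hb
  exact ConnectedComponent.eq.1 (ha.trans hb.symm)

lemma supp_of_reach {α : Type*} {G : SimpleGraph α} {C : G.ConnectedComponent} {a b : α}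
    (ha : a ∈ C.supp) (h : G.Reachable a b) : b ∈ C.supp := by
  rw [ConnectedComponent.mem_supp_iff] at ha ⊢
  rw [← ha]; exact ConnectedComponent.eq.2 h.symm

lemma exists_pendant_of_cut {α : Type*} [Finite α] {G : SimpleGraph α} (hG : G.Connected) :
    ∀ (n : ℕ) (A : Set α) (u v : α), A.ncard = n → Cut G A u v →
      ∃ C, IsPendant G C ∧ C.supp ⊆ A := by
  intro n
  induction n using Nat.strong_induction_on with
  | _ n ih =>
  intro A u v hn hA
  set C := (bicompGraph G).connectedComponentMk u with hC
  have huC : u ∈ C.supp := mem_supp_iff_reach.2 (Reachable.refl _)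
  have hCA : C.supp ⊆ A := fun w hw => bicomp_reach_cut hG hA (supp_reach huC hw) hA.1
  by_cases hp : IsPendant G C
  · exact ⟨C, hp, hCA⟩
  have hbr : G.IsBridge s(u, v) := (bridge_iff_cut hG).2 ⟨A, hA⟩
  have : ∃ f : Sym2 α, G.IsBridge f ∧ f ≠ s(u, v) ∧ ∃ w ∈ C.supp, w ∈ f := by
    by_contra hcon
    push Not at hcon
    apply hp
    refine ⟨s(u, v), ⟨hbr, u, huC, by simp⟩, ?_⟩
    rintro f ⟨hf, w, hw, hwf⟩
    by_contra hne
    exact hcon f hf hne w hw hwf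
  obtain ⟨f, hf, hne, w, hw, hwf⟩ := this
  obtain ⟨z, rfl⟩ := Sym2.mem_iff_exists.1 hwf
  obtain ⟨D, hD⟩ := (bridge_iff_cut hG).1 hf
  have huD : u ∈ D := bicomp_reach_cut hG hD (supp_reach hw huC) hD.1
  have hvD : v ∈ D := by
    by_contra hv
    obtain ⟨rfl, rfl⟩ := hD.2.2.2 u huD v hv hA.2.2.1
    exact hne rfl
  have hZ : Dᶜ ⊆ A := by
    intro x hx
    by_contra hxA
    obtain ⟨a, ha, b, hb, hab⟩ :=
      reach_boundary (A := Dᶜ ∩ Aᶜ) (hG.preconnected x v) ⟨hx, hxA⟩ (fun h => h.1 hvD)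
    by_cases hbA : b ∈ A
    · obtain ⟨rfl, rfl⟩ := hA.2.2.2 b hbA a ha.2 hab.symm
      exact ha.1 hvD
    · have hbD : b ∈ D := by
        by_contra hbD
        exact hb ⟨hbD, hbA⟩
      obtain ⟨rfl, rfl⟩ := hD.2.2.2 b hbD a ha.1 hab.symm
      exact hbA (hCA hw)
  have hlt : (Dᶜ).ncard < A.ncard :=
    Set.ncard_lt_ncard ⟨hZ, fun h => h (hCA hw) hD.1⟩
  obtain ⟨C', h1, h2⟩ := ih _ (hn ▸ hlt) Dᶜ z w rfl hD.compl
  exact ⟨C', h1, h2.trans hZ⟩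

lemma exists_reps {α : Type*} (G : SimpleGraph α) :
    ∃ r : (bicompGraph G).ConnectedComponent → α, (∀ C, r C ∈ C.supp) ∧
      ∀ C, IsPendant G C → ∀ e, G.IsBridge e → r C ∈ e → C.supp = {r C} := by
  have : ∀ C : (bicompGraph G).ConnectedComponent, ∃ x, x ∈ C.supp ∧
      (IsPendant G C → ∀ e, G.IsBridge e → x ∈ e → C.supp = {x}) := by
    intro C
    by_cases h : ∃ x ∈ C.supp, ∀ e, G.IsBridge e → x ∉ e
    · obtain ⟨x, hx, h⟩ := h
      exact ⟨x, hx, fun _ e he hxe => absurd hxe (h e he)⟩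
    · push Not at h
      obtain ⟨x, hx⟩ := C.nonempty_supp
      refine ⟨x, hx, ?_⟩
      intro hP e he hxe
      ext y
      constructor
      · intro hy
        obtain ⟨f, hf, hyf⟩ := h y hy
        have hef : e = f := hP.unique ⟨he, x, hx, hxe⟩ ⟨hf, y, hy, hyf⟩
        subst hef
        by_contra hxy
        have hxy' : x ≠ y := fun h => hxy h.symm
        have := (Sym2.mem_and_mem_iff hxy').1 ⟨hxe, hyf⟩
        subst this
        exact bridge_not_reach he (supp_reach hx hy)
      · rintro rfl
        exact hx
  choose r hr using this
  exact ⟨r, fun C => (hr C).1, fun C => (hr C).2⟩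

lemma reps_bridge {α : Type*} {G : SimpleGraph α} (hG : G.Connected)
    {C C' : (bicompGraph G).ConnectedComponent} {x y : α} (hC : IsPendant G C)
    (hC' : IsPendant G C') (hx : C.supp = {x}) (hy : C'.supp = {y})
    (hb : G.IsBridge s(x, y)) : ∀ w, w = x ∨ w = y := by
  have key : ∀ (C : (bicompGraph G).ConnectedComponent) (x y : α), IsPendant G C →
      C.supp = {x} → G.IsBridge s(x, y) → ∀ b, G.Adj x b → b = y := by
    intro C x y hC hx hb b hab
    have hxC : x ∈ C.supp := by rw [hx]; rfl
    by_cases h : G.IsBridge s(x, b)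
    · have := hC.unique (y₁ := s(x, y)) (y₂ := s(x, b)) ⟨hb, x, hxC, by simp⟩ ⟨h, x, hxC, by simp⟩
      exact (Sym2.congr_right.1 this).symm
    · have h1 : (bicompGraph G).Adj x b := bicomp_adj.2 ⟨hab, h⟩
      have : b ∈ C.supp := supp_of_reach hxC h1.reachable
      rw [hx, Set.mem_singleton_iff] at this
      exact absurd this hab.ne'
  by_contra hcon
  push Not at hcon
  obtain ⟨w, hwx, hwy⟩ := hcon
  obtain ⟨a, ha, b, hb', hab⟩ := reach_boundary (A := {x, y}) (hG.preconnected x w)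
    (by simp) (by simp [hwx, hwy])
  apply hb'
  rcases ha with rfl | rfl
  · right; exact key C _ _ hC hx hb b hab
  · left; exact key C' _ _ hC' hy (by rw [Sym2.eq_swap]; exact hb) b hab

lemma laminar {α : Type*} {G : SimpleGraph α} (hG : G.Connected) {A D : Set α} {u v w z : α}
    (hA : Cut G A u v) (hD : Cut G D w z) {p q r s : α} (hp : p ∈ A ∧ p ∈ D)
    (hq : q ∈ A ∧ q ∉ D) (hr : r ∉ A ∧ r ∈ D) (hs : s ∉ A ∧ s ∉ D) : False := by
  obtain ⟨a1, ha1, b1, hb1, e1⟩ := reach_boundary (A := A ∩ D) (hG.preconnected p s)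
    hp (fun h => hs.1 h.1)
  obtain ⟨a2, ha2, b2, hb2, e2⟩ := reach_boundary (A := A ∩ Dᶜ) (hG.preconnected q r)
    hq (fun h => hr.1 h.1)
  obtain ⟨a3, ha3, b3, hb3, e3⟩ := reach_boundary (A := Aᶜ ∩ D) (hG.preconnected r q)
    hr (fun h => h.1 hq.1)
  obtain ⟨a4, ha4, b4, hb4, e4⟩ := reach_boundary (A := Aᶜ ∩ Dᶜ) (hG.preconnected s p)
    hs (fun h => h.1 hp.1)
  obtain ⟨hu, hv, huv, hA'⟩ := hA
  obtain ⟨hw, hz, hwz, hD'⟩ := hD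
  simp only [Set.mem_inter_iff, Set.mem_compl_iff, not_and, not_not] at *
  have x1 := fun h => hA' a1 ha1.1 b1 h e1
  have y1 := fun h => hD' a1 ha1.2 b1 h e1
  have x2 := fun h => hA' a2 ha2.1 b2 h e2
  have y2 := fun h => hD' b2 h a2 ha2.2 e2.symm
  have x3 := fun h => hA' b3 h a3 ha3.1 e3.symm
  have y3 := fun h => hD' a3 ha3.2 b3 h e3
  have x4 := fun h => hA' b4 h a4 ha4.1 e4.symm
  have y4 := fun h => hD' b4 h a4 ha4.2 e4.symm
  have x5 := fun h h' => hD' u h v h' huv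
  have y5 := fun h h' => hD' v h u h' huv.symm
  have x6 := fun h h' => hA' w h z h' hwz
  have y6 := fun h h' => hA' z h w h' hwz.symm
  clear hA' hD' e1 e2 e3 e4 huv hwz hp hq hr hs hG
  by_cases b1 ∈ A <;> by_cases b2 ∈ A <;> by_cases b3 ∈ A <;> by_cases b4 ∈ A <;>
    by_cases u ∈ D <;> by_cases v ∈ D <;> by_cases w ∈ A <;> by_cases z ∈ A <;> grind

/-- Some edge of `K` crosses `D` under `φ`. -/
def Crosses {α β : Type*} (K : SimpleGraph β) (φ : β ↪ α) (D : Set α) : Prop :=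
  ∃ x y, K.Adj x y ∧ ¬ (φ x ∈ D ↔ φ y ∈ D)

/-- The embedding with the images of `a` and `b` swapped. -/
noncomputable def swapEmb {α β : Type*} (φ : β ↪ α) (a b : β) : β ↪ α :=
  open Classical in (Equiv.swap a b).toEmbedding.trans φ

lemma swapEmb_left {α β : Type*} (φ : β ↪ α) (a b : β) : swapEmb φ a b a = φ b := by
  simp [swapEmb]

lemma swapEmb_right {α β : Type*} (φ : β ↪ α) (a b : β) : swapEmb φ a b b = φ a := by
  simp [swapEmb]

lemma swapEmb_of_ne {α β : Type*} (φ : β ↪ α) {a b x : β} (h1 : x ≠ a) (h2 : x ≠ b) :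
    swapEmb φ a b x = φ x := by
  classical
  simp only [swapEmb, Function.Embedding.trans_apply, Equiv.coe_toEmbedding]
  rw [Equiv.swap_apply_of_ne_of_ne h1 h2]

lemma swapEmb_surj {α β : Type*} (φ : β ↪ α) {S : Set β} {a b : β} (ha : a ∈ S) (hb : b ∈ S)
    {x : β} (hx : x ∈ S) : ∃ y ∈ S, swapEmb φ a b y = φ x := by
  by_cases h1 : x = a
  · exact ⟨b, hb, by rw [swapEmb_right, h1]⟩
  by_cases h2 : x = b
  · exact ⟨a, ha, by rw [swapEmb_left, h2]⟩
  exact ⟨x, hx, swapEmb_of_ne φ h1 h2⟩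

lemma swapEmb_mem {α β : Type*} (φ : β ↪ α) {S : Set β} {a b : β} (ha : a ∈ S) (hb : b ∈ S)
    {x : β} (hx : x ∈ S) : ∃ y ∈ S, swapEmb φ a b x = φ y := by
  by_cases h1 : x = a
  · exact ⟨b, hb, by rw [h1, swapEmb_left]⟩
  by_cases h2 : x = b
  · exact ⟨a, ha, by rw [h2, swapEmb_right]⟩
  exact ⟨x, hx, swapEmb_of_ne φ h1 h2⟩

lemma swap_crosses {α β : Type*} {G : SimpleGraph α} (hG : G.Connected) {K : SimpleGraph β}
    {φ : β ↪ α} {A D : Set α} {u v w z : α} {a1 a2 b1 b2 : β}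
    (hA : Cut G A u v) (hD : Cut G D w z)
    (ha : K.Adj a1 a2) (hb : K.Adj b1 b2)
    (ua : ∀ x, K.Adj a2 x → x = a1) (ub : ∀ x, K.Adj b2 x → x = b1)
    (ha1 : φ a1 ∈ A) (ha2 : φ a2 ∈ A) (hb1 : φ b1 ∉ A) (hb2 : φ b2 ∉ A)
    (hc : Crosses K φ D) : Crosses K (swapEmb φ a2 b2) D := by
  have n1 : a1 ≠ a2 := ha.ne
  have n2 : b1 ≠ b2 := hb.ne
  have n3 : a1 ≠ b2 := by rintro rfl; exact hb2 ha1
  have n4 : b1 ≠ a2 := by rintro rfl; exact hb1 ha2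
  have v1 : swapEmb φ a2 b2 a1 = φ a1 := swapEmb_of_ne φ n1 n3
  have v2 : swapEmb φ a2 b2 a2 = φ b2 := swapEmb_left _ _ _
  have v3 : swapEmb φ a2 b2 b1 = φ b1 := swapEmb_of_ne φ n4 n2
  have v4 : swapEmb φ a2 b2 b2 = φ a2 := swapEmb_right _ _ _
  have lam : ∀ p q r s, p ∈ A ∧ p ∈ D → q ∈ A ∧ q ∉ D → r ∉ A ∧ r ∈ D → s ∉ A ∧ s ∉ D → False :=
    fun p q r s => laminar hG hA hD
  have main : ¬ ((φ a1 ∈ D ↔ φ a2 ∈ D) ∧ (φ b1 ∈ D ↔ φ b2 ∈ D)) →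
      Crosses K (swapEmb φ a2 b2) D := by
    intro h
    by_contra hcon
    have c1 : φ a1 ∈ D ↔ φ b2 ∈ D := by
      by_contra hh
      exact hcon ⟨a1, a2, ha, by rw [v1, v2]; exact hh⟩
    have c2 : φ b1 ∈ D ↔ φ a2 ∈ D := by
      by_contra hh
      exact hcon ⟨b1, b2, hb, by rw [v3, v4]; exact hh⟩
    have l1 := lam (φ a1) (φ a2) (φ b1) (φ b2)
    have l2 := lam (φ a1) (φ a2) (φ b2) (φ b1)
    have l3 := lam (φ a2) (φ a1) (φ b1) (φ b2)
    have l4 := lam (φ a2) (φ a1) (φ b2) (φ b1)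
    clear lam hcon v1 v2 v3 v4 n1 n2 n3 n4 hc ua ub ha hb hA hD hG
    by_cases φ a1 ∈ D <;> by_cases φ a2 ∈ D <;> by_cases φ b1 ∈ D <;> by_cases φ b2 ∈ D <;>
      simp_all
  obtain ⟨x, y, hxy, hx⟩ := hc
  by_cases h1 : (φ a1 ∈ D ↔ φ a2 ∈ D) ∧ (φ b1 ∈ D ↔ φ b2 ∈ D)
  · have nx : x ≠ a2 := by
      rintro rfl
      have := ua y hxy; subst this; exact hx h1.1.symm
    have nx' : x ≠ b2 := by
      rintro rfl
      have := ub y hxy; subst this; exact hx h1.2.symm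
    have ny : y ≠ a2 := by
      rintro rfl
      have := ua x hxy.symm; subst this; exact hx h1.1
    have ny' : y ≠ b2 := by
      rintro rfl
      have := ub x hxy.symm; subst this; exact hx h1.2
    exact ⟨x, y, hxy, by rw [swapEmb_of_ne φ nx nx', swapEmb_of_ne φ ny ny']; exact hx⟩
  · exact main h1

/-- The invariant of the exchange argument. -/
def GoodEmb {α β : Type*} (G : SimpleGraph α) (K : SimpleGraph β) (φ : β ↪ α) : Prop :=
  (∀ A u v, Cut G A u v → ∃ x ∈ K.support, φ x ∈ A) ∧
  (∀ x y, K.Adj x y → ¬ G.IsBridge s(φ x, φ y)) ∧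
  ((∀ x ∈ K.support, ∀ y ∈ K.support, ¬ G.IsBridge s(φ x, φ y)) ∨
    ∀ x y z, K.Adj x y → K.Adj x z → y = z)

lemma swap_good {α β : Type*} {G : SimpleGraph α} {K : SimpleGraph β}
    {φ : β ↪ α} (hφ : GoodEmb G K φ) {a1 a2 b1 b2 : β}
    (ha : K.Adj a1 a2) (hb : K.Adj b1 b2)
    (n3 : a1 ≠ b2) (n4 : b1 ≠ a2)
    (ua : ∀ x, K.Adj a2 x → x = a1) (ub : ∀ x, K.Adj b2 x → x = b1)
    (c1 : ¬ G.IsBridge s(φ a1, φ b2)) (c2 : ¬ G.IsBridge s(φ b1, φ a2)) :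
    GoodEmb G K (swapEmb φ a2 b2) := by
  have n1 : a1 ≠ a2 := ha.ne
  have n2 : b1 ≠ b2 := hb.ne
  have v1 : swapEmb φ a2 b2 a1 = φ a1 := swapEmb_of_ne φ n1 n3
  have v2 : swapEmb φ a2 b2 a2 = φ b2 := swapEmb_left _ _ _
  have v3 : swapEmb φ a2 b2 b1 = φ b1 := swapEmb_of_ne φ n4 n2
  have v4 : swapEmb φ a2 b2 b2 = φ a2 := swapEmb_right _ _ _
  have sa : a2 ∈ K.support := ⟨a1, ha.symm⟩
  have sb : b2 ∈ K.support := ⟨b1, hb.symm⟩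
  obtain ⟨g1, g2, g3⟩ := hφ
  refine ⟨?_, ?_, ?_⟩
  · intro A u v hA
    obtain ⟨x, hx, hxA⟩ := g1 A u v hA
    obtain ⟨y, hy, hyx⟩ := swapEmb_surj φ sa sb hx
    exact ⟨y, hy, hyx ▸ hxA⟩
  · have key : ∀ x y, K.Adj x y → x = a2 ∨ x = b2 →
        ¬ G.IsBridge s(swapEmb φ a2 b2 x, swapEmb φ a2 b2 y) := by
      rintro x y hxy (rfl | rfl)
      · have := ua y hxy; subst this
        rw [v1, v2, Sym2.eq_swap]; exact c1
      · have := ub y hxy; subst this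
        rw [v3, v4, Sym2.eq_swap]; exact c2
    intro x y hxy
    by_cases h1 : x = a2 ∨ x = b2
    · exact key x y hxy h1
    by_cases h2 : y = a2 ∨ y = b2
    · rw [Sym2.eq_swap]; exact key y x hxy.symm h2
    push Not at h1 h2
    rw [swapEmb_of_ne φ h1.1 h1.2, swapEmb_of_ne φ h2.1 h2.2]
    exact g2 x y hxy
  · rcases g3 with g3 | g3
    · left
      intro x hx y hy
      obtain ⟨x', hx', e1⟩ := swapEmb_mem φ sa sb hx
      obtain ⟨y', hy', e2⟩ := swapEmb_mem φ sa sb hy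
      rw [e1, e2]
      exact g3 x' hx' y' hy'
    · exact Or.inr g3

lemma exchange_step {α β : Type*} {G : SimpleGraph α} (hG : G.Connected) {K : SimpleGraph β}
    (hK : ∀ x y, K.Adj x y → (∀ z, K.Adj x z → z = y) ∨ (∀ z, K.Adj y z → z = x))
    {φ : β ↪ α} (hφ : GoodEmb G K φ) {A : Set α} {u v : α} (hA : Cut G A u v)
    (hn : ¬ Crosses K φ A) :
    ∃ φ', GoodEmb G K φ' ∧ Crosses K φ' A ∧
      ∀ D w z, Cut G D w z → Crosses K φ D → Crosses K φ' D := by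
  have hn' : ∀ x y, K.Adj x y → (φ x ∈ A ↔ φ y ∈ A) := by
    intro x y hxy
    by_contra h
    exact hn ⟨x, y, hxy, h⟩
  have ex : ∀ x ∈ K.support, ∃ a1 a2, K.Adj a1 a2 ∧ (∀ z, K.Adj a2 z → z = a1) ∧
      (φ a1 ∈ A ↔ φ x ∈ A) ∧ (φ a2 ∈ A ↔ φ x ∈ A) := by
    rintro x ⟨y, hxy⟩
    rcases hK x y hxy with h | h
    · exact ⟨y, x, hxy.symm, h, (hn' x y hxy).symm, Iff.rfl⟩
    · exact ⟨x, y, hxy, h, Iff.rfl, (hn' x y hxy).symm⟩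
  obtain ⟨x, hx, hxA⟩ := hφ.1 A u v hA
  obtain ⟨y, hy, hyA⟩ := hφ.1 _ _ _ hA.compl
  obtain ⟨a1, a2, ha, ua, ha1, ha2⟩ := ex x hx
  obtain ⟨b1, b2, hb, ub, hb1, hb2⟩ := ex y hy
  have hyA' : φ y ∉ A := hyA
  replace ha1 := ha1.2 hxA
  replace ha2 := ha2.2 hxA
  replace hb1 : φ b1 ∉ A := fun h => hyA' (hb1.1 h)
  replace hb2 : φ b2 ∉ A := fun h => hyA' (hb2.1 h)
  have bridge_uv : ∀ p q, φ p ∈ A → φ q ∉ A → G.IsBridge s(φ p, φ q) → φ p = u ∧ φ q = v := by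
    intro p q hp hq hbr
    exact hA.2.2.2 _ hp _ hq (hbr.reachable_iff_adj.1 (hG.preconnected _ _))
  have go : ∀ b1 b2, K.Adj b1 b2 → (∀ z, K.Adj b2 z → z = b1) → φ b1 ∉ A → φ b2 ∉ A →
      ¬ G.IsBridge s(φ a1, φ b2) → ¬ G.IsBridge s(φ a2, φ b1) →
      ∃ φ', GoodEmb G K φ' ∧ Crosses K φ' A ∧
      ∀ D w z, Cut G D w z → Crosses K φ D → Crosses K φ' D := by
    intro b1 b2 hb ub hb1 hb2 c1 c2
    have n3 : a1 ≠ b2 := by rintro rfl; exact hb2 ha1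
    have n4 : b1 ≠ a2 := by rintro rfl; exact hb1 ha2
    refine ⟨swapEmb φ a2 b2, swap_good hφ ha hb n3 n4 ua ub c1 ?_, ?_, ?_⟩
    · rw [Sym2.eq_swap]; exact c2
    · refine ⟨a1, a2, ha, ?_⟩
      rw [swapEmb_of_ne φ ha.ne n3, swapEmb_left]
      tauto
    · intro D w z hD hc
      exact swap_crosses hG hA hD ha hb ua ub ha1 ha2 hb1 hb2 hc
  rcases hφ.2.2 with g | g
  · exact go b1 b2 hb ub hb1 hb2 (g _ ⟨_, ha⟩ _ ⟨_, hb.symm⟩) (g _ ⟨_, ha.symm⟩ _ ⟨_, hb⟩)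
  · have ub' : ∀ z, K.Adj b1 z → z = b2 := fun z hz => g _ _ _ hz hb
    have na : φ a1 ≠ φ a2 := fun h => ha.ne (φ.injective h)
    have nb : φ b1 ≠ φ b2 := fun h => hb.ne (φ.injective h)
    have i1 := bridge_uv a1 b2 ha1 hb2
    have i2 := bridge_uv a2 b1 ha2 hb1
    have i3 := bridge_uv a1 b1 ha1 hb1
    have i4 := bridge_uv a2 b2 ha2 hb2
    by_cases h1 : G.IsBridge s(φ a1, φ b2)
    · refine go b2 b1 hb.symm ub' hb2 hb1 (fun h => ?_) (fun h => ?_)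
      · exact nb ((i3 h).2.trans (i1 h1).2.symm)
      · exact na ((i1 h1).1.trans (i4 h).1.symm)
    by_cases h2 : G.IsBridge s(φ a2, φ b1)
    · refine go b2 b1 hb.symm ub' hb2 hb1 (fun h => ?_) (fun h => ?_)
      · exact na ((i3 h).1.trans (i2 h2).1.symm)
      · exact nb ((i2 h2).2.trans (i4 h).2.symm)
    exact go b1 b2 hb ub hb1 hb2 h1 h2

lemma exchange {α β : Type*} [Finite α] [Finite β] {G : SimpleGraph α} (hG : G.Connected)
    {K : SimpleGraph β}
    (hK : ∀ x y, K.Adj x y → (∀ z, K.Adj x z → z = y) ∨ (∀ z, K.Adj y z → z = x))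
    {φ : β ↪ α} (hφ : GoodEmb G K φ) :
    ∃ φ, GoodEmb G K φ ∧ ∀ A u v, Cut G A u v → Crosses K φ A := by
  have : Finite (β ↪ α) := Finite.of_injective (fun f : β ↪ α => (f : β → α)) DFunLike.coe_injective
  obtain ⟨ψ, hψ, hmax⟩ := Set.exists_max_image {φ : β ↪ α | GoodEmb G K φ}
    (fun φ => {A : Set α | (∃ u v, Cut G A u v) ∧ Crosses K φ A}.ncard) (Set.toFinite _) ⟨φ, hφ⟩
  refine ⟨ψ, hψ, ?_⟩
  intro A u v hA
  by_contra hn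
  obtain ⟨φ', h1, h2, h3⟩ := exchange_step hG hK hψ hA hn
  have := hmax φ' h1
  refine absurd this (not_le.2 (Set.ncard_lt_ncard ⟨?_, ?_⟩ (Set.toFinite _)))
  · rintro D ⟨⟨w, z, hD⟩, hc⟩
    exact ⟨⟨w, z, hD⟩, h3 D w z hD hc⟩
  · intro hsub
    exact hn (hsub ⟨⟨u, v, hA⟩, h2⟩).2

lemma superpose_adj {α β : Type*} {G : SimpleGraph α} {H : SimpleGraph β} {φ : β ↪ α} {a b : α} :
    (superpose G H φ).Adj a b ↔ G.Adj a b ∨ ∃ x y, H.Adj x y ∧ φ x = a ∧ φ y = b := by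
  simp [superpose, SimpleGraph.map_adj]

lemma superpose_connected {α β : Type*} {G : SimpleGraph α} (hG : G.Connected)
    (H : SimpleGraph β) (φ : β ↪ α) : (superpose G H φ).Connected :=
  hG.mono le_sup_left

lemma superpose_good {α β : Type*} {G : SimpleGraph α} (hG : G.Connected)
    {H : SimpleGraph β} {φ : β ↪ α}
    (h : ∀ A u v, Cut G A u v → ∃ x y, H.Adj x y ∧ ¬ G.IsBridge s(φ x, φ y) ∧
      ¬ (φ x ∈ A ↔ φ y ∈ A)) : TwoEdgeConnected (superpose G H φ) := by
  have hF := superpose_connected hG H φ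
  refine ⟨hF, ?_⟩
  intro e
  induction e with | _ a b =>
  intro hbr
  obtain ⟨A, hA1, hA2, hA3, hA4⟩ := (bridge_iff_cut hF).1 hbr
  have hGA : Cut G A a b := by
    obtain ⟨x, hx, y, hy, hxy⟩ := reach_boundary (hG.preconnected a b) hA1 hA2
    obtain ⟨rfl, rfl⟩ := hA4 x hx y hy (superpose_adj.2 (Or.inl hxy))
    exact ⟨hx, hy, hxy, fun c hc d hd hcd => hA4 c hc d hd (superpose_adj.2 (Or.inl hcd))⟩
  have hGb := (bridge_iff_cut hG).2 ⟨A, hGA⟩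
  obtain ⟨x, y, hxy, hnb, hc⟩ := h A a b hGA
  by_cases hx : φ x ∈ A
  · have hy : φ y ∉ A := by tauto
    obtain ⟨e1, e2⟩ := hA4 _ hx _ hy (superpose_adj.2 (Or.inr ⟨x, y, hxy, rfl, rfl⟩))
    rw [e1, e2] at hnb
    exact hnb hGb
  · have hy : φ y ∈ A := by tauto
    obtain ⟨e1, e2⟩ := hA4 _ hy _ hx (superpose_adj.2 (Or.inr ⟨y, x, hxy.symm, rfl, rfl⟩))
    rw [e1, e2, Sym2.eq_swap] at hnb
    exact hnb hGb

lemma minimal_subgraph {β : Type*} [Finite β] (H : SimpleGraph β) (p : ℕ)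
    (hp : p ≤ H.support.ncard) :
    ∃ K ≤ H, (∀ x y, K.Adj x y → (∀ z, K.Adj x z → z = y) ∨ (∀ z, K.Adj y z → z = x)) ∧
      (K.support.ncard = p ∨
        (K.support.ncard = p + 1 ∧ ∀ x y z, K.Adj x y → K.Adj x z → y = z)) := by
  obtain ⟨K, ⟨hKH, hKp⟩, hmin⟩ :=
    Set.Finite.exists_minimal (s := {K : SimpleGraph β | K ≤ H ∧ p ≤ K.support.ncard})
      (Set.toFinite _) ⟨H, le_rfl, hp⟩
  have hdel : ∀ x y, K.Adj x y → (K.deleteEdges {s(x, y)}).support.ncard < p := by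
    intro x y hxy
    by_contra hcon
    have := hmin (y := K.deleteEdges {s(x, y)})
      ⟨(deleteEdges_le _).trans hKH, not_lt.1 hcon⟩ (deleteEdges_le _)
    have h2 := this hxy
    rw [deleteEdges_adj] at h2
    exact h2.2 rfl
  have hsup : ∀ x y w, K.Adj x y → w ∈ K.support →
      w ∈ (K.deleteEdges {s(x, y)}).support ∨ w = x ∨ w = y := by
    rintro x y w hxy ⟨t, hwt⟩
    by_cases h : s(w, t) = s(x, y)
    · rcases Sym2.eq_iff.1 h with h | h
      · exact Or.inr (Or.inl h.1)
      · exact Or.inr (Or.inr h.1)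
    · left
      exact (mem_support _).2 ⟨t, deleteEdges_adj.2 ⟨hwt, h⟩⟩
  have hleft : ∀ x y z, K.Adj x y → K.Adj x z → z ≠ y →
      x ∈ (K.deleteEdges {s(x, y)}).support := by
    intro x y z hxy hxz hne
    refine (mem_support _).2 ⟨z, deleteEdges_adj.2 ⟨hxz, ?_⟩⟩
    intro h
    exact hne (Sym2.congr_right.1 h)
  have hright : ∀ x y z, K.Adj x y → K.Adj y z → z ≠ x →
      y ∈ (K.deleteEdges {s(x, y)}).support := by
    intro x y z hxy hxz hne
    have := hleft y x z hxy.symm hxz hne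
    rwa [Sym2.eq_swap] at this
  refine ⟨K, hKH, ?_, ?_⟩
  · intro x y hxy
    by_contra hcon
    push Not at hcon
    obtain ⟨⟨z, hz, hzy⟩, ⟨t, ht, htx⟩⟩ := hcon
    have hsub : K.support ⊆ (K.deleteEdges {s(x, y)}).support := by
      intro w hw
      rcases hsup x y w hxy hw with h | rfl | rfl
      · exact h
      · exact hleft _ y z hxy hz hzy
      · exact hright x _ t hxy ht htx
    have h1 := Set.ncard_le_ncard hsub
    have h2 := hdel x y hxy
    omega
  · by_cases hpe : K.support.ncard = p
    · exact Or.inl hpe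
    right
    constructor
    · have hne : K.support.Nonempty := by
        rw [← Set.ncard_pos]; omega
      obtain ⟨x, y, hxy⟩ := hne
      have hsub : K.support ⊆ insert x (insert y (K.deleteEdges {s(x, y)}).support) := by
        intro w hw
        rcases hsup x y w hxy hw with h | rfl | rfl
        · exact Or.inr (Or.inr h)
        · exact Or.inl rfl
        · exact Or.inr (Or.inl rfl)
      have h1 := Set.ncard_le_ncard hsub
      have h2 := hdel x y hxy
      have h3 := Set.ncard_insert_le x (insert y (K.deleteEdges {s(x, y)}).support)
      have h4 := Set.ncard_insert_le y (K.deleteEdges {s(x, y)}).support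
      omega
    · intro x y z hxy hxz
      by_contra hne
      have hsub : K.support ⊆ insert y (K.deleteEdges {s(x, y)}).support := by
        intro w hw
        rcases hsup x y w hxy hw with h | rfl | rfl
        · exact Or.inr h
        · exact Or.inr (hleft _ y z hxy hxz (Ne.symm hne))
        · exact Or.inl rfl
      have h1 := Set.ncard_le_ncard hsub
      have h2 := hdel x y hxy
      have h4 := Set.ncard_insert_le y (K.deleteEdges {s(x, y)}).support
      omega

lemma exists_two_nbrs {β : Type*} {H : SimpleGraph β} (hne : Nonempty β)
    (hiso : ∀ x : β, ∃ y : β, H.Adj x y) (hm : ¬ IsMatchingGraph H) :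
    ∃ x y z, H.Adj x y ∧ H.Adj x z ∧ y ≠ z := by
  by_contra hcon
  push Not at hcon
  apply hm
  refine ⟨hne, fun x => ?_⟩
  obtain ⟨y, hy⟩ := hiso x
  exact ⟨y, hy, fun z hz => hcon x z y hz hy⟩

lemma delete_one {β : Type*} [Fintype β] {H : SimpleGraph β}
    (hiso : ∀ x : β, ∃ y : β, H.Adj x y) {x y z : β} (hxy : H.Adj x y) (hxz : H.Adj x z)
    (hyz : y ≠ z) : ∃ K ≤ H, K.support.ncard + 1 = Fintype.card β := by
  have key : ∀ w, (∀ v, v ≠ w → ∃ t, t ≠ w ∧ H.Adj v t) →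
      ∃ K ≤ H, K.support.ncard + 1 = Fintype.card β := by
    intro w hw
    refine ⟨H.deleteEdges {e | w ∈ e}, deleteEdges_le _, ?_⟩
    have : (H.deleteEdges {e | w ∈ e}).support = {w}ᶜ := by
      ext v
      rw [mem_support]
      simp only [deleteEdges_adj, Set.mem_ofPred_eq, Sym2.mem_iff, Set.mem_compl_iff,
        Set.mem_singleton_iff, not_or]
      constructor
      · rintro ⟨t, _, h, _⟩
        exact fun h' => h h'.symm
      · intro hv
        obtain ⟨t, ht, hvt⟩ := hw v hv
        exact ⟨t, hvt, fun h => hv h.symm, fun h => ht h.symm⟩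
    rw [this]
    have h := Set.ncard_add_ncard_compl ({w} : Set β)
    rw [Set.ncard_singleton, Nat.card_eq_fintype_card] at h
    omega
  by_cases h : ∀ v, v ≠ y → ∃ t, t ≠ y ∧ H.Adj v t
  · exact key y h
  · push Not at h
    obtain ⟨v, hv, hvy⟩ := h
    have hvadj : H.Adj v y := by
      obtain ⟨t, ht⟩ := hiso v
      by_cases h : t = y
      · exact h ▸ ht
      · exact absurd ht (hvy t h)
    refine key v ?_
    intro w hw
    by_cases hwy : w = y
    · subst hwy
      refine ⟨x, ?_, hxy.symm⟩
      rintro rfl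
      exact hvy z hyz.symm hxz
    · obtain ⟨t, ht⟩ := hiso w
      refine ⟨t, ?_, ht⟩
      rintro rfl
      exact hvy w hwy ht.symm

lemma even_support {β : Type*} [Fintype β] {K : SimpleGraph β}
    (h : ∀ x y z, K.Adj x y → K.Adj x z → y = z) : Even K.support.ncard := by
  classical
  have := K.even_card_odd_degree_vertices
  have e : K.support = ((Finset.univ.filter fun v => Odd (K.degree v) : Finset β) : Set β) := by
    ext v
    simp only [Finset.coe_filter, Finset.mem_univ, true_and, Set.mem_ofPred_eq]
    constructor
    · rintro ⟨y, hy⟩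
      have : K.degree v = 1 := by
        rw [degree_eq_one_iff_existsUnique_adj]
        exact ⟨y, hy, fun z hz => h v z y hz hy⟩
      rw [this]; exact odd_one
    · intro hodd
      have : 0 < K.degree v := hodd.pos
      rw [K.degree_pos_iff_exists_adj] at this
      exact this
  rw [e, Set.ncard_coe_finset]
  exact this

lemma exists_emb {α β : Type*} [Fintype α] [Fintype β] (hcard : Fintype.card β ≤ Fintype.card α)
    (T : Set β) (S : Set α) (h : T.ncard = S.ncard) :
    ∃ φ : β ↪ α, (∀ x ∈ T, φ x ∈ S) ∧ ∀ s ∈ S, ∃ x ∈ T, φ x = s := by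
  classical
  have hne : Nonempty (T ≃ S) := by
    have h := h
    rw [← Nat.card_coe_set_eq, ← Nat.card_coe_set_eq] at h
    rw [Nat.card_eq_fintype_card, Nat.card_eq_fintype_card] at h
    exact ⟨Fintype.equivOfCardEq h⟩
  obtain ⟨e⟩ := hne
  obtain ⟨φ, hφ⟩ : ∃ φ : β ↪ α, ∀ x : T, φ x = e x := by
    have hS : S.toFinset.card ≤ Fintype.card β := by
      rw [← Set.ncard_eq_toFinset_card', ← h, Set.ncard_eq_toFinset_card']
      exact Finset.card_le_univ _
    obtain ⟨t, hSt, ht⟩ := Finset.exists_superset_card_eq hS hcard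
    by_cases hα : Nonempty α
    · obtain ⟨a0⟩ := hα
      obtain ⟨g, hg⟩ := Set.MapsTo.exists_equiv_extend_of_card_eq (t := t) ht.symm (s := T)
        (f := fun x => if h : x ∈ T then (e ⟨x, h⟩ : α) else a0)
        (by
          intro x hx
          simp only [hx, dif_pos]
          exact hSt (by simp))
        (by
          intro x hx y hy hxy
          simp only [hx, hy, dif_pos] at hxy
          have := e.injective (Subtype.ext hxy)
          exact congrArg Subtype.val this)
      refine ⟨g.toEmbedding.trans (Function.Embedding.subtype _), fun x => ?_⟩
      have := hg x x.2
      simpa using this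
    · have : IsEmpty α := not_nonempty_iff.1 hα
      have hb : IsEmpty β := by
        rw [← Fintype.card_eq_zero_iff]
        have h0 : Fintype.card α = 0 := Fintype.card_eq_zero (α := α)
        omega
      exact ⟨⟨fun x => (hb.false x).elim, fun x => (hb.false x).elim⟩, fun x => (hb.false x).elim⟩
  refine ⟨φ, fun x hx => ?_, fun s hs => ?_⟩
  · rw [hφ ⟨x, hx⟩]; exact (e _).2
  · refine ⟨e.symm ⟨s, hs⟩, (e.symm _).2, ?_⟩
    rw [hφ]; simp

lemma star_iso_s16 {α : Type*} [Fintype α] {G : SimpleGraph α} {n : ℕ} (x : α)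
    (h1 : ∀ u, u ≠ x → G.Adj x u) (h2 : ∀ u v, u ≠ x → v ≠ x → ¬ G.Adj u v)
    (hc : Fintype.card α = n + 1) :
    Nonempty (G ≃g completeBipartiteGraph (Fin 1) (Fin n)) := by
  classical
  have c0 : Fintype.card {a // a = x} = 1 := Fintype.card_subtype_eq x
  have c1 : Fintype.card {a // ¬ a = x} = n := by
    rw [Fintype.card_subtype_compl, c0, hc]; rfl
  let e : α ≃ Fin 1 ⊕ Fin n := (Equiv.sumCompl (fun a => a = x)).symm.trans
    (Equiv.sumCongr (Fintype.equivFinOfCardEq c0) (Fintype.equivFinOfCardEq c1))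
  have e1 : ∀ a, a = x → (e a).isLeft = true ∧ (e a).isRight = false := by
    intro a ha
    simp [e, Equiv.sumCompl_symm_apply_of_pos (p := fun a => a = x) ha]
  have e2 : ∀ a, a ≠ x → (e a).isLeft = false ∧ (e a).isRight = true := by
    intro a ha
    simp [e, Equiv.sumCompl_symm_apply_of_neg (p := fun a => a = x) ha]
  refine ⟨⟨e, ?_⟩⟩
  intro a b
  simp only [completeBipartiteGraph]
  by_cases ha : a = x <;> by_cases hb : b = x
  · subst ha; subst hb
    simp [e1 b rfl]
  · subst ha
    simp [e1 a rfl, e2 b hb, h1 b hb]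
  · subst hb
    simp [e1 b rfl, e2 a ha, (h1 a ha).symm]
  · simp [e2 a ha, e2 b hb, h2 a b ha hb]

lemma star_data {α : Type*} [Fintype α] {G : SimpleGraph α} {n : ℕ}
    (f : G ≃g completeBipartiteGraph (Fin 1) (Fin n)) :
    ∃ c, (∀ a, a ≠ c → G.Adj a c) ∧ (∀ a, a ≠ c → ∀ b, G.Adj a b → b = c) ∧
      Fintype.card α = n + 1 := by
  have hl : ∀ a, a ≠ f.symm (Sum.inl 0) → ∃ i, f a = Sum.inr i := by
    intro a ha
    rcases h : f a with i | i
    · exfalso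
      apply ha
      have : i = 0 := Subsingleton.elim _ _
      rw [← this, ← h]; simp
    · exact ⟨i, rfl⟩
  refine ⟨f.symm (Sum.inl 0), ?_, ?_, ?_⟩
  · intro a ha
    obtain ⟨i, hi⟩ := hl a ha
    rw [← f.map_adj_iff, hi]
    simp
  · intro a ha b hab
    by_contra hb
    obtain ⟨i, hi⟩ := hl a ha
    obtain ⟨j, hj⟩ := hl b hb
    rw [← f.map_adj_iff, hi, hj] at hab
    simp at hab
  · rw [Fintype.card_congr f.toEquiv]
    simp [add_comm]

lemma exists_transversal {α : Type*} [Finite α] {G : SimpleGraph α} (hG : G.Connected) :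
    ∃ S : Set α, S.ncard = numPendant G ∧ (∀ A u v, Cut G A u v → ∃ s ∈ S, s ∈ A) ∧
      ∀ s ∈ S, ∀ t ∈ S, G.IsBridge s(s, t) → ∀ w, w = s ∨ w = t := by
  obtain ⟨r, hr1, hr2⟩ := exists_reps G
  have hinj : Function.Injective r := by
    intro C C' h
    have h1 := hr1 C
    have h2 := hr1 C'
    rw [ConnectedComponent.mem_supp_iff] at h1 h2
    rw [← h1, ← h2, h]
  refine ⟨Set.image r {C | IsPendant G C}, ?_, ?_, ?_⟩
  · rw [Set.ncard_image_of_injective _ hinj]; rfl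
  · intro A u v hA
    obtain ⟨C, hC, hCA⟩ := exists_pendant_of_cut hG _ A u v rfl hA
    exact ⟨r C, ⟨C, hC, rfl⟩, hCA (hr1 C)⟩
  · rintro _ ⟨C, hC, rfl⟩ _ ⟨C', hC', rfl⟩ hb
    exact reps_bridge hG hC hC' (hr2 C hC _ hb (by simp)) (hr2 C' hC' _ hb (by simp)) hb

lemma finish {α β : Type*} [Finite α] [Finite β] {G : SimpleGraph α} (hG : G.Connected)
    {H K : SimpleGraph β} (hKH : K ≤ H)
    (hK : ∀ x y, K.Adj x y → (∀ z, K.Adj x z → z = y) ∨ (∀ z, K.Adj y z → z = x))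
    {φ : β ↪ α} (hφ : GoodEmb G K φ) : ∃ φ : β ↪ α, TwoEdgeConnected (superpose G H φ) := by
  obtain ⟨ψ, h1, h2⟩ := exchange hG hK hφ
  refine ⟨ψ, superpose_good hG ?_⟩
  intro A u v hA
  obtain ⟨x, y, hxy, hc⟩ := h2 A u v hA
  exact ⟨x, y, hKH hxy, h1.2.1 x y hxy, hc⟩

lemma forward_cut {α β : Type*} {G : SimpleGraph α} (hG : G.Connected)
    {H : SimpleGraph β} {φ : β ↪ α} (hF : TwoEdgeConnected (superpose G H φ)) {A : Set α} {u v : α}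
    (hA : Cut G A u v) : ∃ x y, H.Adj x y ∧ φ x ∈ A ∧ φ y ∉ A ∧ ¬ (φ x = u ∧ φ y = v) := by
  by_contra hcon
  push Not at hcon
  refine hF.2 s(u, v) ((bridge_iff_cut hF.1).2 ⟨A, hA.1, hA.2.1,
    superpose_adj.2 (Or.inl hA.2.2.1), ?_⟩)
  intro a ha b hb hab
  rcases superpose_adj.1 hab with h | ⟨x, y, hxy, rfl, rfl⟩
  · exact hA.2.2.2 a ha b hb h
  · exact hcon x y hxy ha hb

lemma pendant_cut {α : Type*} {G : SimpleGraph α} (hG : G.Connected)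
    {C : (bicompGraph G).ConnectedComponent} (hC : IsPendant G C) :
    ∃ u v, Cut G C.supp u v := by
  obtain ⟨e, ⟨he, w, hw, hwe⟩, huniq⟩ := hC
  obtain ⟨z, rfl⟩ := Sym2.mem_iff_exists.1 hwe
  have hz : z ∉ C.supp := fun hz => bridge_not_reach he (supp_reach hw hz)
  refine ⟨w, z, hw, hz, he.reachable_iff_adj.1 (hG.preconnected _ _), ?_⟩
  intro a ha b hb hab
  have hbr : G.IsBridge s(a, b) := by
    by_contra hn
    have h1 : (bicompGraph G).Adj a b := bicomp_adj.2 ⟨hab, hn⟩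
    exact hb (supp_of_reach ha h1.reachable)
  have := huniq _ ⟨hbr, a, ha, by simp⟩
  rcases Sym2.eq_iff.1 this with h | h
  · exact h
  · exact absurd (h.1 ▸ ha) hz

lemma forward_one {α β : Type*} [Fintype α] [Fintype β] {G : SimpleGraph α} (hG : G.Connected)
    {H : SimpleGraph β} {φ : β ↪ α} (hF : TwoEdgeConnected (superpose G H φ)) :
    numPendant G ≤ Fintype.card β := by
  have key : ∀ C : (bicompGraph G).ConnectedComponent, IsPendant G C → ∃ x, φ x ∈ C.supp := by
    intro C hC
    obtain ⟨u, v, hA⟩ := pendant_cut hG hC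
    obtain ⟨x, y, _, hx, _⟩ := forward_cut hG hF hA
    exact ⟨x, hx⟩
  have hsub : {C | IsPendant G C} ⊆
      Set.range (fun x : β => (bicompGraph G).connectedComponentMk (φ x)) := by
    intro C hC
    obtain ⟨x, hx⟩ := key C hC
    exact ⟨x, hx⟩
  have h1 := Set.ncard_le_ncard hsub (Set.toFinite _)
  have h2 := Set.ncard_image_le (s := (Set.univ : Set β))
    (f := fun x : β => (bicompGraph G).connectedComponentMk (φ x)) (Set.toFinite _)
  rw [Set.image_univ, Set.ncard_univ, Nat.card_eq_fintype_card] at h2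
  exact h1.trans h2

lemma forward_two {α β : Type*} [Fintype α] [Fintype β] {G : SimpleGraph α} (hG : G.Connected)
    {H : SimpleGraph β} {φ : β ↪ α} (hF : TwoEdgeConnected (superpose G H φ))
    {n : ℕ} (hn : Odd n) (f : G ≃g completeBipartiteGraph (Fin 1) (Fin n))
    (hm : IsMatchingGraph H) : False := by
  obtain ⟨c, h1, h2, hc⟩ := star_data f
  have huniq : ∀ x y z, H.Adj x y → H.Adj x z → y = z := fun x y z hy hz =>
    (hm.2 x).unique hy hz
  have key : ∀ a, a ≠ c → ∃ x y, H.Adj x y ∧ φ x = a ∧ φ y ≠ c := by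
    intro a ha
    have hA : Cut G {a} a c := by
      refine ⟨rfl, fun h => ha h.symm, h1 a ha, ?_⟩
      rintro a' rfl b _ hab
      exact ⟨rfl, h2 _ ha b hab⟩
    obtain ⟨x, y, hxy, hx, hy, hn⟩ := forward_cut hG hF hA
    exact ⟨x, y, hxy, hx, fun h => hn ⟨hx, h⟩⟩
  have hr : Set.range φ = {c}ᶜ := by
    ext a
    constructor
    · rintro ⟨z, rfl⟩ hz
      have hz : φ z = c := hz
      obtain ⟨y, hy, _⟩ := hm.2 z
      have hyc : φ y ≠ c := by
        intro h
        exact hy.ne (φ.injective (hz.trans h.symm))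
      obtain ⟨x, y', hxy, hx, hy'⟩ := key (φ y) hyc
      have := φ.injective hx
      subst this
      have := huniq _ _ _ hxy hy.symm
      exact hy' (this ▸ hz)
    · intro ha
      obtain ⟨x, _, _, hx, _⟩ := key a ha
      exact ⟨x, hx⟩
  have h3 : (Set.range φ).ncard = Fintype.card β := by
    rw [← Set.image_univ, Set.ncard_image_of_injective _ φ.injective, Set.ncard_univ,
      Nat.card_eq_fintype_card]
  have h4 := Set.ncard_add_ncard_compl ({c} : Set α)
  rw [Set.ncard_singleton, Nat.card_eq_fintype_card, ← hr, h3, hc] at h4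
  have h5 := even_support huniq
  have h6 : H.support = Set.univ := by
    ext x
    obtain ⟨y, hy, _⟩ := hm.2 x
    exact ⟨fun _ => trivial, fun _ => (mem_support _).2 ⟨y, hy⟩⟩
  rw [h6, Set.ncard_univ, Nat.card_eq_fintype_card] at h5
  have h7 : Fintype.card β = n := by omega
  rw [h7] at h5
  exact (Nat.not_even_iff_odd.2 hn) h5

lemma backward {α β : Type*} [Fintype α] [Fintype β]
    (G : SimpleGraph α) (hG : G.Connected) (H : SimpleGraph β)
    (hne : Nonempty β)
    (hiso : ∀ x : β, ∃ y : β, H.Adj x y)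
    (hcard : Fintype.card β ≤ Fintype.card α)
    (hnot : ¬ TwoEdgeConnected G) (hp : numPendant G ≤ Fintype.card β)
    (hstar : ¬ ((∃ n : ℕ, Odd n ∧
              Nonempty (G ≃g completeBipartiteGraph (Fin 1) (Fin n))) ∧
            IsMatchingGraph H)) :
    ∃ φ : β ↪ α, TwoEdgeConnected (superpose G H φ) := by
  classical
  obtain ⟨A, u₀, v₀, hA⟩ : ∃ A u v, Cut G A u v := by
    by_contra hcon
    apply hnot
    refine ⟨hG, fun e => ?_⟩
    induction e with
    | h u v =>
      intro hb
      obtain ⟨A, hA⟩ := (bridge_iff_cut hG).1 hb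
      exact hcon ⟨A, u, v, hA⟩
  have hHs : H.support.ncard = Fintype.card β := by
    have h6 : H.support = Set.univ := by
      ext x
      obtain ⟨y, hy⟩ := hiso x
      exact ⟨fun _ => trivial, fun _ => (mem_support _).2 ⟨y, hy⟩⟩
    rw [h6, Set.ncard_univ, Nat.card_eq_fintype_card]
  obtain ⟨S, hSc, hSA, hSb⟩ := exists_transversal hG
  have adj_of : ∀ {u v}, G.IsBridge s(u, v) → G.Adj u v := fun hb =>
    hb.reachable_iff_adj.1 (hG.preconnected _ _)
  have nobr : ∀ s ∈ S, ∀ t ∈ S, ¬ G.IsBridge s(s, t) := by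
    intro s hs t ht hb
    have hall := hSb s hs t ht hb
    have hst := adj_of hb
    have huniv : (Finset.univ : Finset α) = {s, t} := by
      ext w; simpa using hall w
    have hc2 : Fintype.card α = 2 := by
      rw [← Finset.card_univ, huniv, Finset.card_pair hst.ne]
    apply hstar
    refine ⟨⟨1, odd_one, star_iso_s16 s ?_ ?_ hc2⟩, ?_⟩
    · intro w hw
      rcases hall w with h | h
      · exact absurd h hw
      · rw [h]; exact hst
    · intro u v hu hv huv
      have e1 : u = t := (hall u).resolve_left hu
      have e2 : v = t := (hall v).resolve_left hv
      exact huv.ne (e1.trans e2.symm)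
    · by_contra hm
      obtain ⟨x, y, z, hxy, hxz, hyz⟩ := exists_two_nbrs hne hiso hm
      have h3 : ({x, y, z} : Finset β).card = 3 :=
        Finset.card_eq_three.2 ⟨x, y, z, hxy.ne, hxz.ne, hyz, rfl⟩
      have h4 := Finset.card_le_univ ({x, y, z} : Finset β)
      omega
  have caseA : ∀ K ≤ H,
      (∀ x y, K.Adj x y → (∀ z, K.Adj x z → z = y) ∨ (∀ z, K.Adj y z → z = x)) →
      K.support.ncard = numPendant G →
      ∃ φ : β ↪ α, TwoEdgeConnected (superpose G H φ) := by
    intro K hKH hK hKc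
    obtain ⟨φ, hφ1, hφ2⟩ := exists_emb hcard K.support S (hKc.trans hSc.symm)
    have hno : ∀ x ∈ K.support, ∀ y ∈ K.support, ¬ G.IsBridge s(φ x, φ y) :=
      fun x hx y hy => nobr _ (hφ1 x hx) _ (hφ1 y hy)
    refine finish hG hKH hK (φ := φ) ⟨?_, ?_, Or.inl hno⟩
    · intro B u v hB
      obtain ⟨s, hs, hsB⟩ := hSA B u v hB
      obtain ⟨x, hx, rfl⟩ := hφ2 s hs
      exact ⟨x, hx, hsB⟩
    · intro x y hxy
      exact hno x ((mem_support _).2 ⟨y, hxy⟩) y ((mem_support _).2 ⟨x, hxy.symm⟩)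
  obtain ⟨K, hKH, hK, hKc | ⟨hKc, hKm⟩⟩ := minimal_subgraph H (numPendant G) (by omega)
  · exact caseA K hKH hK hKc
  have hev := even_support hKm
  have hodd : Odd (numPendant G) := by
    rw [hKc] at hev
    rcases Nat.even_or_odd (numPendant G) with h | h
    · rw [Nat.even_add_one] at hev; exact absurd h hev
    · exact h
  have hKle : K.support.ncard ≤ Fintype.card β := by
    have := Set.ncard_le_ncard (Set.subset_univ K.support)
    rwa [Set.ncard_univ, Nat.card_eq_fintype_card] at this
  by_cases hx : ∃ x u, x ∉ S ∧ u ∈ S ∧ ¬ G.IsBridge s(x, u)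
  · obtain ⟨x, u, hxS, huS, hxu⟩ := hx
    have hins : (insert x S).ncard = numPendant G + 1 := by
      rw [Set.ncard_insert_of_notMem hxS, hSc]
    obtain ⟨φ₀, h1, h2⟩ := exists_emb hcard K.support (insert x S) (hKc.trans hins.symm)
    obtain ⟨k1, hk1, hk1x⟩ := h2 x (Set.mem_insert _ _)
    obtain ⟨k3, hk3, hk3u⟩ := h2 u (Set.mem_insert_of_mem _ huS)
    obtain ⟨k2, hk12⟩ := (mem_support _).1 hk1
    have hk2 : k2 ∈ K.support := (mem_support _).2 ⟨k1, hk12.symm⟩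
    have n13 : k1 ≠ k3 := by
      rintro rfl
      exact hxS (hk1x ▸ hk3u ▸ huS)
    have v1 : swapEmb φ₀ k2 k3 k1 = x := by
      rw [swapEmb_of_ne φ₀ hk12.ne n13, hk1x]
    have v2 : swapEmb φ₀ k2 k3 k2 = u := by rw [swapEmb_left, hk3u]
    have hS' : ∀ y ∈ K.support, y ≠ k1 → swapEmb φ₀ k2 k3 y ∈ S := by
      intro y hy hyk
      obtain ⟨z, hz, e⟩ := swapEmb_mem φ₀ hk2 hk3 hy
      rcases h1 z hz with h | h
      · exfalso
        apply hyk
        apply (swapEmb φ₀ k2 k3).injective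
        rw [e, h, v1]
      · rw [e]; exact h
    have edge1 : ∀ y, K.Adj k1 y → ¬ G.IsBridge s(swapEmb φ₀ k2 k3 k1, swapEmb φ₀ k2 k3 y) := by
      intro y hy
      have := hKm _ _ _ hk12 hy
      subst this
      rw [v1, v2]; exact hxu
    refine finish hG hKH hK (φ := swapEmb φ₀ k2 k3) ⟨?_, ?_, Or.inr hKm⟩
    · intro B a b hB
      obtain ⟨s, hs, hsB⟩ := hSA B a b hB
      obtain ⟨y, hy, rfl⟩ := h2 s (Set.mem_insert_of_mem _ hs)
      obtain ⟨z, hz, e⟩ := swapEmb_surj φ₀ hk2 hk3 hy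
      exact ⟨z, hz, e ▸ hsB⟩
    · intro y z hyz
      by_cases hy1 : y = k1
      · subst hy1; exact edge1 z hyz
      by_cases hz1 : z = k1
      · subst hz1; rw [Sym2.eq_swap]; exact edge1 y hyz.symm
      exact nobr _ (hS' y ((mem_support _).2 ⟨z, hyz⟩) hy1) _
        (hS' z ((mem_support _).2 ⟨y, hyz.symm⟩) hz1)
  · push Not at hx
    obtain ⟨u1, hu1, hu1A⟩ := hSA A _ _ hA
    obtain ⟨u2, hu2, hu2A⟩ := hSA _ _ _ hA.compl
    have hu12 : u1 ≠ u2 := by rintro rfl; exact hu2A hu1A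
    obtain ⟨x, hxS⟩ : ∃ x, x ∉ S := by
      by_contra hcon
      push Not at hcon
      have : S = Set.univ := Set.eq_univ_of_forall hcon
      rw [this, Set.ncard_univ, Nat.card_eq_fintype_card] at hSc
      omega
    have huniq : ∀ y, y ∉ S → y = x := by
      intro y hyS
      obtain ⟨B, b1, b2, b3, b4⟩ := (bridge_iff_cut hG).1 (hx x u1 hxS hu1)
      by_contra hyx
      have hu2B : u2 ∈ B := by
        by_contra h
        exact hu12 (b4 x b1 u2 h (adj_of (hx x u2 hxS hu2))).2.symm
      have hyB : y ∈ B := by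
        by_contra h
        have := (b4 u2 hu2B y h (adj_of (hx y u2 hyS hu2)).symm).1
        exact hxS (this ▸ hu2)
      exact hyx (b4 y hyB u1 b2 (adj_of (hx y u1 hyS hu1))).1
    have hmem : ∀ y, y ≠ x → y ∈ S := fun y hy => by
      by_contra h; exact hy (huniq y h)
    have hcomp : Sᶜ = {x} := by
      ext y
      exact ⟨huniq y, fun h => by rw [Set.mem_singleton_iff.1 h]; exact hxS⟩
    have hcα : Fintype.card α = numPendant G + 1 := by
      have := Set.ncard_add_ncard_compl S
      rw [hcomp, Set.ncard_singleton, hSc, Nat.card_eq_fintype_card] at this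
      exact this.symm
    have hst := star_iso_s16 (G := G) x (fun u hu => adj_of (hx x u hxS (hmem u hu)))
      (by
        intro a b ha hb hab
        obtain ⟨B, b1, b2, b3, b4⟩ := (bridge_iff_cut hG).1 (hx x a hxS (hmem a ha))
        by_cases hbB : b ∈ B
        · exact hb (b4 b hbB a b2 hab.symm).1
        · exact hab.ne (b4 x b1 b hbB (adj_of (hx x b hxS (hmem b hb)))).2.symm) hcα
    have hm : ¬ IsMatchingGraph H := fun hm => hstar ⟨⟨_, hodd, hst⟩, hm⟩
    obtain ⟨a, b, c, hab, hac, hbc⟩ := exists_two_nbrs hne hiso hm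
    obtain ⟨K0, hK0, hK0c⟩ := delete_one hiso hab hac hbc
    obtain ⟨K', hK'0, hK', hK'c⟩ := minimal_subgraph K0 (numPendant G) (by omega)
    refine caseA K' (hK'0.trans hK0) hK' ?_
    rcases hK'c with h | ⟨h, _⟩
    · exact h
    · have := Set.ncard_le_ncard (support_mono hK'0)
      omega
/-- Let `G` be connected, `H` nonempty without isolated vertices, `|V(H)| ≤ |V(G)|`.
Then there is an injective `φ : V(H) ↪ V(G)` such that `F = G ⊕_φ H` is edge
2-connected iff (1) `G` is edge 2-connected, or `G` is not edge 2-connected and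
`p(G) ≤ |V(H)|`; and (2) it is not the case that `G` is isomorphic to a star
`K_{1,n}` with `n` odd and `H` is a matching graph. -/
theorem stmt16 {α β : Type*} [Fintype α] [Fintype β]
    (G : SimpleGraph α) (hG : G.Connected) (H : SimpleGraph β)
    (hne : Nonempty β)
    (hiso : ∀ x : β, ∃ y : β, H.Adj x y)
    (hcard : Fintype.card β ≤ Fintype.card α) :
    (∃ φ : β ↪ α, TwoEdgeConnected (superpose G H φ)) ↔
      ((TwoEdgeConnected G ∨
          (¬ TwoEdgeConnected G ∧ numPendant G ≤ Fintype.card β)) ∧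
        ¬ ((∃ n : ℕ, Odd n ∧
              Nonempty (G ≃g completeBipartiteGraph (Fin 1) (Fin n))) ∧
            IsMatchingGraph H)) := by
  constructor
  · rintro ⟨φ, hF⟩
    refine ⟨?_, ?_⟩
    · by_cases h : TwoEdgeConnected G
      · exact Or.inl h
      · exact Or.inr ⟨h, forward_one hG hF⟩
    · rintro ⟨⟨n, hn, ⟨f⟩⟩, hm⟩
      exact forward_two hG hF hn f hm
  · rintro ⟨h | ⟨h, hp⟩, hstar⟩
    · obtain ⟨φ⟩ := Function.Embedding.nonempty_of_card_le hcard
      refine ⟨φ, superpose_good hG ?_⟩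
      intro A u v hA
      exact absurd ((bridge_iff_cut hG).2 ⟨A, hA⟩) (h.2 _)
    · exact backward G hG H hne hiso hcard h hp hstar
end
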